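/- Optimal scaling of MaxWeight in a simultaneous heavy-traffic and large-switch regime (Corollary 6.2, MaxWeight part). Fix β > 4 and a sequence (γ_n)_{n≥1} of positive reals with 0 < c ≤ γ_n ≤ C < ∞ for all n and 2γ_n ≤ n^{β−1}. For each n, consider an n×n switch whose arrival entries are independent Bernoulli with P(a_{ij}=1) = (1 − γ_n n^{−β})/n, operated under MaxWeight, and let π^{(n)} be an invariant distribution of the corresponding Markov chain. Then ( E_{π^{(n)}}[∑_{ij} q̄^{(n)}_{ij}] − n^{1+β}/γ_n ) / n^{1+β} → 0 as n → ∞; in particular, E_{π^{(n)}}[∑_{ij} q̄^{(n)}_{ij}] = Θ(n^{1+β}). -/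

import Mathlib

open scoped BigOperators ENNReal

namespace SwitchModel

/-- Next queue state: `q⁺_{ij} = max(q_{ij} + a_{ij} − s_{ij}, 0)` (truncated `ℕ` subtraction). -/
def nextQ (n : ℕ) (q a s : Fin n → Fin n → ℕ) : Fin n → Fin n → ℕ :=
  fun i j => q i j + a i j - s i j

/-- A 0–1 matrix with at most one 1 per row and per column. -/
def IsSchedule (n : ℕ) (s : Fin n → Fin n → ℕ) : Prop :=
  (∀ i j, s i j ≤ 1) ∧ (∀ i, (∑ j, s i j) ≤ 1) ∧ (∀ j, (∑ i, s i j) ≤ 1)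

/-- A permutation matrix: exactly one 1 per row and per column. -/
def IsPerm (n : ℕ) (s : Fin n → Fin n → ℕ) : Prop :=
  (∀ i j, s i j ≤ 1) ∧ (∀ i, (∑ j, s i j) = 1) ∧ (∀ j, (∑ i, s i j) = 1)

/-- MaxWeight selection: `sched q` is a permutation matrix maximizing `∑ q_{ij} s_{ij}`. -/
def IsMaxWeight (n : ℕ) (sched : (Fin n → Fin n → ℕ) → (Fin n → Fin n → ℕ)) : Prop :=
  ∀ q, IsPerm n (sched q) ∧
    ∀ s, IsPerm n s → (∑ i, ∑ j, q i j * s i j) ≤ (∑ i, ∑ j, q i j * sched q i j)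

/-- Joint arrival probability: the entries are mutually independent with marginals `A i j`. -/
noncomputable def jointA (n : ℕ) (A : Fin n → Fin n → ℕ → ℝ≥0∞) (a : Fin n → Fin n → ℕ) : ℝ≥0∞ :=
  ∏ i, ∏ j, A i j (a i j)

/-- `A i j` is a probability distribution on `ℕ` supported on `[0, amax]`,
with mean `lam i j` and variance `(sig i j)^2`. -/
def ArrivalDist (n : ℕ) (A : Fin n → Fin n → ℕ → ℝ≥0∞)
    (lam sig : Fin n → Fin n → ℝ) (amax : ℕ) : Prop :=
  (∀ i j, (∑' k : ℕ, A i j k) = 1) ∧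
  (∀ i j k, A i j k ≠ 0 → k ≤ amax) ∧
  (∀ i j, (∑' k : ℕ, (A i j k).toReal * (k : ℝ)) = lam i j) ∧
  (∀ i j, (∑' k : ℕ, (A i j k).toReal * ((k : ℝ) - lam i j) ^ 2) = (sig i j) ^ 2)

/-- Transition kernel of the switch under a deterministic scheduling map `sched`. -/
noncomputable def kernelMW (n : ℕ) (A : Fin n → Fin n → ℕ → ℝ≥0∞)
    (sched : (Fin n → Fin n → ℕ) → (Fin n → Fin n → ℕ))
    (q q' : Fin n → Fin n → ℕ) : ℝ≥0∞ :=
  ∑' a : Fin n → Fin n → ℕ, jointA n A a * (if nextQ n q a (sched q) = q' then 1 else 0)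

/-- Transition kernel of the switch under a randomized scheduling policy `pol`
(the schedule is chosen independently of the current arrivals). -/
noncomputable def kernelPol (n : ℕ) (A : Fin n → Fin n → ℕ → ℝ≥0∞)
    (pol : (Fin n → Fin n → ℕ) → (Fin n → Fin n → ℕ) → ℝ≥0∞)
    (q q' : Fin n → Fin n → ℕ) : ℝ≥0∞ :=
  ∑' a : Fin n → Fin n → ℕ, ∑' s : Fin n → Fin n → ℕ,
    jointA n A a * pol q s * (if nextQ n q a s = q' then 1 else 0)

/-- `pd` is an invariant (stationary) probability distribution of the kernel `P`. -/
def IsInvariant (n : ℕ)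
    (P : (Fin n → Fin n → ℕ) → (Fin n → Fin n → ℕ) → ℝ≥0∞)
    (pd : (Fin n → Fin n → ℕ) → ℝ≥0∞) : Prop :=
  (∑' q : Fin n → Fin n → ℕ, pd q) = 1 ∧
  ∀ q', (∑' q : Fin n → Fin n → ℕ, pd q * P q q') = pd q'

/-- The face `F`: nonnegative matrices with all row and column sums equal to 1. -/
def memF (n : ℕ) (ν : Fin n → Fin n → ℝ) : Prop :=
  (∀ i j, 0 ≤ ν i j) ∧ (∀ i, (∑ j, ν i j) = 1) ∧ (∀ j, (∑ i, ν i j) = 1)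

/-- Steady-state expectation of the total queue length `∑_{ij} q_{ij}`. -/
noncomputable def Etot (n : ℕ) (pd : (Fin n → Fin n → ℕ) → ℝ≥0∞) : ℝ≥0∞ :=
  ∑' q : Fin n → Fin n → ℕ, pd q * (∑ i, ∑ j, (q i j : ℝ≥0∞))

/-- Steady-state expectation of `(∑_{ij} q_{ij})²`. -/
noncomputable def Etot2 (n : ℕ) (pd : (Fin n → Fin n → ℕ) → ℝ≥0∞) : ℝ≥0∞ :=
  ∑' q : Fin n → Fin n → ℕ, pd q * (∑ i, ∑ j, (q i j : ℝ≥0∞)) ^ 2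

/-- Euclidean norm on `ℝ^{n×n}`. -/
noncomputable def normE (n : ℕ) (x : Fin n → Fin n → ℝ) : ℝ :=
  Real.sqrt (∑ i, ∑ j, x i j ^ 2)

/-- The cone `K = {x : x_{ij} = w_i + w̃_j, w, w̃ ≥ 0}`. -/
def coneK (n : ℕ) : Set (Fin n → Fin n → ℝ) :=
  {x | ∃ w wt : Fin n → ℝ, (∀ i, 0 ≤ w i) ∧ (∀ j, 0 ≤ wt j) ∧ ∀ i j, x i j = w i + wt j}

/-- Embedding of queue states into `ℝ^{n×n}`. -/
def toR (n : ℕ) (q : Fin n → Fin n → ℕ) : Fin n → Fin n → ℝ :=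
  fun i j => (q i j : ℝ)

/-- `proj` is the nearest-point projection onto the cone `K`. -/
def IsConeProj (n : ℕ) (proj : (Fin n → Fin n → ℝ) → (Fin n → Fin n → ℝ)) : Prop :=
  ∀ x, proj x ∈ coneK n ∧ ∀ y ∈ coneK n, normE n (x - proj x) ≤ normE n (x - y)

/-- Bernoulli distribution on `ℕ` with success probability `p`. -/
noncomputable def bern (p : ℝ) : ℕ → ℝ≥0∞ :=
  fun k => if k = 0 then ENNReal.ofReal (1 - p) else if k = 1 then ENNReal.ofReal p else 0

end SwitchModel

open SwitchModel Filter

/-!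
Write `ε` for the distance of the load from `1`, `X` for the distance of the queue matrix from the
cone `𝒦` of nonnegative matrices `w i + w' j`, and `P` for the orthogonal projection onto the span
of `𝒦`.

By Moreau's decomposition the displacement `y` of `q` from `𝒦` lies in the polar cone of `𝒦`, so
`1/n + y / (n ‖y‖)` is doubly substochastic. By Birkhoff's theorem MaxWeight does at least as well
as this matrix, so `X` drifts down at rate at least `1 / (2n)`, and the drift of `X ^ 4` gives
`E X ^ 3 = O(n ^ 6)` in stationarity.

In the recursion `q⁺ = q + a - s + u`, the schedule `s` projects to `1/n`, so up to the unused
service `u` the drift of `‖P q‖ ^ 2` is `-2 (ε / n) ∑ q + ε ^ 2` plus the trace `(2n - 1) p (1 - p)`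
of the projected arrival noise, which is close to `2`. Since `⟪q⁺, u⟫ = 0`, the contribution of `u`
is at most `2 X ‖u‖ + ‖u‖ ^ 2`. Now `E ‖u‖ ^ 2 = n ε` and, for every `m > 0`,
`X ‖u‖ ≤ X ^ 3 / m ^ 2 + m ‖u‖ ^ 2`; taking `m = n / √ε` yields
`|ε / n * E ∑ q - 1| = O(n ^ 4 ε + n ^ 2 √ε + 1 / n)`, which tends to `0` when `β > 4`.
-/

namespace SwitchModel

open MeasureTheory ProbabilityTheory Metric
open scoped RealInnerProductSpace Topology

/-! ### Inner products, norms and elementary inequalities -/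

section Cone

variable {F : Type*} [NormedAddCommGroup F] [InnerProductSpace ℝ F] [CompleteSpace F]

theorem exists_infDist_eq_norm_sub_properCone (K : ProperCone ℝ F) (x : F) :
    ∃ k ∈ K, infDist x K = ‖x - k‖ ∧ ⟪x - k, k⟫ = 0 ∧ ∀ z ∈ K, ⟪x - k, z⟫ ≤ 0 := by
  obtain ⟨k, hk, hmin⟩ := exists_norm_eq_iInf_of_complete_convex K.nonempty
    K.isClosed.isComplete K.convex x
  have hvar := (norm_eq_iInf_iff_real_inner_le_zero K.convex hk).1 hmin
  have hle : ∀ z ∈ K, ⟪x - k, z⟫ ≤ 0 := fun z hz => by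
    simpa using hvar (z + k) (add_mem hz hk)
  refine ⟨k, hk, ?_, (hle k hk).antisymm ?_, hle⟩
  · simpa only [infDist_eq_iInf, dist_eq_norm] using hmin.symm
  · simpa using hvar 0 (zero_mem K)

end Cone

theorem abs_norm_starProjection_sq_sub_le {F : Type*} [NormedAddCommGroup F]
    [InnerProductSpace ℝ F] (K : Submodule ℝ F) [K.HasOrthogonalProjection] {z u : F}
    (h : ⟪z, u⟫ = 0) :
    |‖K.starProjection z‖ ^ 2 - ‖K.starProjection (z - u)‖ ^ 2| ≤
      2 * ‖z - K.starProjection z‖ * ‖u‖ + ‖u‖ ^ 2 := by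
  have hcross : ⟪K.starProjection z, K.starProjection u⟫ = -⟪z - K.starProjection z, u⟫ := by
    rw [← Submodule.inner_starProjection_left_eq_right,
      Submodule.starProjection_eq_self_iff.2 (Submodule.starProjection_apply_mem _ _),
      inner_sub_left, h, zero_sub, neg_neg]
  have hcs := abs_real_inner_le_norm (z - K.starProjection z) u
  have hPu : ‖K.starProjection u‖ ^ 2 ≤ ‖u‖ ^ 2 :=
    pow_le_pow_left₀ (norm_nonneg _) (K.norm_starProjection_apply_le u) 2
  rw [map_sub, norm_sub_sq_real, hcross, abs_le]
  have := abs_le.1 hcs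
  constructor <;> nlinarith [sq_nonneg ‖K.starProjection u‖]

theorem norm_add_pow_four_le {F : Type*} [NormedAddCommGroup F] [InnerProductSpace ℝ F] (y b : F) :
    ‖y + b‖ ^ 4 ≤
      ‖y‖ ^ 4 + 4 * ‖y‖ ^ 2 * ⟪y, b⟫ + 10 * ‖y‖ ^ 2 * ‖b‖ ^ 2 + 2 * (‖b‖ ^ 2) ^ 2 := by
  have hcs : ⟪y, b⟫ ^ 2 ≤ ‖y‖ ^ 2 * ‖b‖ ^ 2 := by
    simpa [mul_pow] using pow_le_pow_left₀ (abs_nonneg _) (abs_real_inner_le_norm y b) 2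
  have hsq : ‖y + b‖ ^ 4 = (‖y‖ ^ 2 + 2 * ⟪y, b⟫ + ‖b‖ ^ 2) ^ 2 := by
    rw [← norm_add_sq_real]; ring
  nlinarith [sq_nonneg (2 * ⟪y, b⟫ - ‖b‖ ^ 2)]

theorem mul_sq_le_mul_cube_add {a x δ : ℝ} (ha : 0 ≤ a) (hx : 0 ≤ x) (hδ : 0 < δ) :
    a * x ^ 2 ≤ δ * x ^ 3 + a ^ 3 / δ ^ 2 := by
  rcases le_total a (δ * x) with h | h
  · calc a * x ^ 2 ≤ δ * x * x ^ 2 := by gcongr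
      _ ≤ δ * x ^ 3 + a ^ 3 / δ ^ 2 := by
        have : 0 ≤ a ^ 3 / δ ^ 2 := by positivity
        linarith [show δ * x * x ^ 2 = δ * x ^ 3 by ring]
  · calc a * x ^ 2 ≤ a * (a / δ) ^ 2 := by gcongr; rwa [le_div_iff₀' hδ]
      _ = a ^ 3 / δ ^ 2 := by ring
      _ ≤ δ * x ^ 3 + a ^ 3 / δ ^ 2 := le_add_of_nonneg_left (by positivity)

theorem mul_le_cube_div_sq_add {x v m : ℝ} (hm : 0 < m) (hx : 0 ≤ x) (hv : v = 0 ∨ 1 ≤ v) :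
    x * v ≤ x ^ 3 / m ^ 2 + m * v ^ 2 := by
  rcases hv with rfl | hv
  · have : 0 ≤ x ^ 3 / m ^ 2 := by positivity
    simpa
  have : 0 ≤ v := zero_le_one.trans hv
  rcases le_total x (m * v) with h | h
  · calc x * v ≤ m * v * v := by gcongr
      _ ≤ x ^ 3 / m ^ 2 + m * v ^ 2 := by
        have : 0 ≤ x ^ 3 / m ^ 2 := by positivity
        linarith [show m * v * v = m * v ^ 2 by ring]
  · have hmx : m ≤ x := (le_mul_of_one_le_right hm.le hv).trans h
    calc x * v ≤ x * (x / m) := by gcongr; rwa [le_div_iff₀' hm]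
      _ ≤ x * (x / m) * (x / m) := le_mul_of_one_le_right (by positivity) ((one_le_div hm).2 hmx)
      _ = x ^ 3 / m ^ 2 := by ring
      _ ≤ x ^ 3 / m ^ 2 + m * v ^ 2 := le_add_of_nonneg_right (by positivity)

theorem abs_natCast_sub_sub_le (N s : ℕ) {k : ℝ} (hk : 0 ≤ k) :
    |((N - s : ℕ) : ℝ) - k| ≤ |(N : ℝ) - s - k| := by
  rcases le_total s N with h | h
  · rw [Nat.cast_sub h]
  · have hNs : (N : ℝ) ≤ s := Nat.cast_le.2 h
    rw [Nat.sub_eq_zero_of_le h, Nat.cast_zero, zero_sub, abs_neg, abs_of_nonneg hk, le_abs]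
    right
    linarith

section DoublyStochastic

variable {ι : Type*} [Fintype ι]

theorem exists_doublyStochastic_ge [DecidableEq ι] {M : Matrix ι ι ℝ} (h0 : ∀ i j, 0 ≤ M i j)
    (hrow : ∀ i, ∑ j, M i j ≤ 1) (hcol : ∀ j, ∑ i, M i j ≤ 1) :
    ∃ D ∈ doublyStochastic ℝ ι, ∀ i j, M i j ≤ D i j := by
  set r : ι → ℝ := fun i => 1 - ∑ j, M i j
  set d : ι → ℝ := fun j => 1 - ∑ i, M i j
  have hr (i) : 0 ≤ r i := sub_nonneg.2 (hrow i)
  have hd (j) : 0 ≤ d j := sub_nonneg.2 (hcol j)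
  have hrd : ∑ i, r i = ∑ j, d j := by
    simp only [r, d, Finset.sum_sub_distrib]; rw [Finset.sum_comm]
  have hfill (i j) : 0 ≤ r i * d j / ∑ j, d j :=
    div_nonneg (mul_nonneg (hr i) (hd j)) (Finset.sum_nonneg fun j _ => hd j)
  refine ⟨fun i j => M i j + r i * d j / ∑ j, d j, mem_doublyStochastic_iff_sum.2
    ⟨fun i j => add_nonneg (h0 i j) (hfill i j), fun i => ?_, fun j => ?_⟩,
    fun i j => le_add_of_nonneg_right (hfill i j)⟩
  · have hi : ∑ j, d j = 0 → r i = 0 := fun h =>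
      (Finset.sum_eq_zero_iff_of_nonneg fun i _ => hr i).1 (hrd.trans h) i (Finset.mem_univ i)
    rw [Finset.sum_add_distrib, ← Finset.sum_div, ← Finset.mul_sum, mul_div_cancel_of_imp hi]
    exact add_sub_cancel _ _
  · have hj : ∑ i, r i = 0 → d j = 0 := fun h =>
      (Finset.sum_eq_zero_iff_of_nonneg fun j _ => hd j).1 (hrd.symm.trans h) j (Finset.mem_univ j)
    rw [Finset.sum_add_distrib, ← Finset.sum_div, ← Finset.sum_mul, ← hrd, mul_comm,
      mul_div_cancel_of_imp hj]
    exact add_sub_cancel _ _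

theorem sum_mul_le_of_mem_doublyStochastic [DecidableEq ι] {D w : Matrix ι ι ℝ} {c : ℝ}
    (hD : D ∈ doublyStochastic ℝ ι)
    (hperm : ∀ σ : Equiv.Perm ι, ∑ i, ∑ j, w i j * σ.permMatrix ℝ i j ≤ c) :
    ∑ i, ∑ j, w i j * D i j ≤ c := by
  rw [← SetLike.mem_coe, doublyStochastic_eq_convexHull_permMatrix] at hD
  have hconv : Convex ℝ {D : Matrix ι ι ℝ | ∑ i, ∑ j, w i j * D i j ≤ c} :=
    convex_halfSpace_le
      ⟨fun x y => by simp [mul_add, Finset.sum_add_distrib],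
        fun a x => by simp [Finset.mul_sum, mul_left_comm]⟩ c
  exact convexHull_min (by rintro _ ⟨σ, rfl⟩; exact hperm σ) hconv hD

end DoublyStochastic

/-! ### Stationary drift and uncorrelated noise -/

theorem integral_comp_of_measurePreserving {α β E : Type*} [MeasurableSpace α] [MeasurableSpace β]
    [NormedAddCommGroup E] [NormedSpace ℝ E] {μ : Measure α} {ν : Measure β} {T : α → β} {f : β → E}
    (hT : MeasurePreserving T μ ν) (hf : AEStronglyMeasurable f ν) :
    ∫ x, f (T x) ∂μ = ∫ y, f y ∂ν := by
  rw [← hT.map_eq, integral_map hT.aemeasurable (hT.map_eq.symm ▸ hf)]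

section Drift

variable {S A : Type*} [MeasurableSpace S] [MeasurableSpace A] {μ : Measure S} {ν : Measure A}
  [IsProbabilityMeasure μ] [IsProbabilityMeasure ν] {T : S × A → S}

-- Truncating the Lyapunov function at `N` makes its stationary mean finite, so that it cancels.
theorem setLIntegral_le_of_drift (hT : MeasurePreserving T (μ.prod ν) μ) {f g : S → ℝ≥0∞}
    {c : ℝ≥0∞} (hf : Measurable f)
    (hdrift : ∀ q, ∫⁻ a, f (T (q, a)) ∂ν + g q ≤ f q + c) (N : ℕ) :
    ∫⁻ q in {q | f q ≤ N}, g q ∂μ ≤ c := by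
  have hs : MeasurableSet {q | f q ≤ N} := measurableSet_le hf measurable_const
  set fN : S → ℝ≥0∞ := fun q => min (f q) N with hfN
  have hfNm : Measurable fN := hf.min measurable_const
  have hdriftN (q) : ∫⁻ a, fN (T (q, a)) ∂ν + {q | f q ≤ N}.indicator g q ≤ fN q + c := by
    by_cases hq : f q ≤ N
    · calc ∫⁻ a, fN (T (q, a)) ∂ν + {q | f q ≤ N}.indicator g q
          ≤ ∫⁻ a, f (T (q, a)) ∂ν + g q :=
            add_le_add (lintegral_mono fun _ => min_le_left _ _) (Set.indicator_le_self _ _ _)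
        _ ≤ fN q + c := by simpa [hfN, min_eq_left hq] using hdrift q
    · have hN : fN q = N := min_eq_right (not_le.1 hq).le
      calc ∫⁻ a, fN (T (q, a)) ∂ν + {q | f q ≤ N}.indicator g q
          ≤ ∫⁻ _, N ∂ν + 0 :=
            add_le_add (lintegral_mono fun _ => min_le_right _ _) (by simp [hq])
        _ ≤ fN q + c := by simp [hN]
  have hfin : ∫⁻ q, fN q ∂μ ≠ ∞ :=
    ((lintegral_mono fun q => min_le_right (f q) N).trans_lt (by simp)).ne
  have hstat : ∫⁻ q, ∫⁻ a, fN (T (q, a)) ∂ν ∂μ = ∫⁻ q, fN q ∂μ := by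
    rw [← hT.lintegral_comp hfNm]
    exact (lintegral_prod _ (hfNm.comp hT.measurable).aemeasurable).symm
  have hfNT : Measurable fun q => ∫⁻ a, fN (T (q, a)) ∂ν :=
    (hfNm.comp hT.measurable).lintegral_prod_right'
  have hmean := lintegral_mono (μ := μ) hdriftN
  rw [lintegral_add_left hfNT, lintegral_add_left hfNm, lintegral_const, measure_univ, mul_one,
    hstat, lintegral_indicator hs] at hmean
  exact (ENNReal.add_le_add_iff_left hfin).1 hmean

theorem lintegral_le_of_drift (hT : MeasurePreserving T (μ.prod ν) μ) {f g : S → ℝ≥0∞}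
    {c : ℝ≥0∞} (hf : Measurable f) (hf_top : ∀ q, f q ≠ ∞)
    (hdrift : ∀ q, ∫⁻ a, f (T (q, a)) ∂ν + g q ≤ f q + c) :
    ∫⁻ q, g q ∂μ ≤ c := by
  have hmono : Monotone fun N : ℕ => {q | f q ≤ N} := fun M N hMN q (hq : f q ≤ M) =>
    hq.trans (Nat.cast_le.2 hMN)
  have huniv : ⋃ N : ℕ, {q | f q ≤ N} = Set.univ := Set.eq_univ_of_forall fun q =>
    let ⟨N, hN⟩ := ENNReal.exists_nat_gt (hf_top q)
    Set.mem_iUnion.2 ⟨N, hN.le⟩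
  rw [← setLIntegral_univ, ← huniv, setLIntegral_iUnion_of_directed _ hmono.directed_le]
  exact iSup_le (setLIntegral_le_of_drift hT hf hdrift)

theorem integrable_and_integral_le_of_drift (hT : MeasurePreserving T (μ.prod ν) μ)
    {f g : S → ℝ} {c : ℝ} (hf : Measurable f) (hg : AEStronglyMeasurable g μ) (hf0 : 0 ≤ f)
    (hg0 : 0 ≤ g) (hc : 0 ≤ c) (hfT : ∀ q, Integrable (fun a => f (T (q, a))) ν)
    (hdrift : ∀ q, ∫ a, f (T (q, a)) ∂ν ≤ f q - g q + c) :
    Integrable g μ ∧ ∫ q, g q ∂μ ≤ c := by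
  have hle (q) : ∫⁻ a, .ofReal (f (T (q, a))) ∂ν + .ofReal (g q) ≤ .ofReal (f q) + .ofReal c := by
    rw [← ofReal_integral_eq_lintegral_ofReal (hfT q) (.of_forall fun a => hf0 (T (q, a))),
      ← ENNReal.ofReal_add (integral_nonneg fun a => hf0 (T (q, a))) (hg0 q),
      ← ENNReal.ofReal_add (hf0 q) hc]
    exact ENNReal.ofReal_le_ofReal (by linarith [hdrift q])
  have hlint := lintegral_le_of_drift hT hf.ennreal_ofReal (fun q => ENNReal.ofReal_ne_top) hle
  have hint : Integrable g μ := ⟨hg, (hasFiniteIntegral_iff_ofReal (.of_forall hg0)).2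
    (hlint.trans_lt ENNReal.ofReal_lt_top)⟩
  refine ⟨hint, ?_⟩
  rw [integral_eq_lintegral_of_nonneg_ae (.of_forall hg0) hg]
  exact ENNReal.toReal_le_of_le_ofReal hc hlint

theorem abs_integral_le_of_drift (hT : MeasurePreserving T (μ.prod ν) μ) {f g : S → ℝ}
    {h r : S × A → ℝ} (hf : Integrable f μ) (hr : Integrable r (μ.prod ν))
    (hh : AEStronglyMeasurable h (μ.prod ν)) (hfh : ∀ x, |f (T x) - h x| ≤ r x)
    (hdrift : ∀ q, ∫ a, h (q, a) ∂ν = f q - g q) :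
    |∫ q, g q ∂μ| ≤ ∫ x, r x ∂μ.prod ν := by
  have hfT : Integrable (fun x => f (T x)) (μ.prod ν) := hT.integrable_comp_of_integrable hf
  have hdiff : Integrable (fun x => f (T x) - h x) (μ.prod ν) :=
    hr.mono' (hfT.aestronglyMeasurable.sub hh) (.of_forall hfh)
  have hint : Integrable h (μ.prod ν) :=
    (hfT.sub hdiff).congr (.of_forall fun x => sub_sub_cancel (f (T x)) (h x))
  have hmean : ∫ q, g q ∂μ = ∫ x, (f (T x) - h x) ∂μ.prod ν := by
    rw [integral_sub hfT hint, integral_comp_of_measurePreserving hT hf.aestronglyMeasurable,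
      integral_prod _ hint, ← integral_sub hf hint.integral_prod_left]
    simp [hdrift]
  rw [hmean]
  exact abs_integral_le_integral_abs.trans (integral_mono hdiff.norm hr hfh)

end Drift

section Noise

variable {Ω ι F : Type*} [MeasurableSpace Ω] {ν : Measure Ω} [IsProbabilityMeasure ν] [Fintype ι]
  [NormedAddCommGroup F] [InnerProductSpace ℝ F]

theorem integral_norm_add_sum_smul_sq [DecidableEq ι] {ξ : ι → Ω → ℝ} {σ2 : ℝ}
    (hint : ∀ i, Integrable (ξ i) ν) (hint2 : ∀ i j, Integrable (fun ω => ξ i ω * ξ j ω) ν)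
    (hmean : ∀ i, ∫ ω, ξ i ω ∂ν = 0)
    (hcov : ∀ i j, ∫ ω, ξ i ω * ξ j ω ∂ν = if i = j then σ2 else 0) (c : F) (v : ι → F) :
    ∫ ω, ‖c + ∑ i, ξ i ω • v i‖ ^ 2 ∂ν = ‖c‖ ^ 2 + σ2 * ∑ i, ‖v i‖ ^ 2 := by
  have hexpand (ω) : ‖c + ∑ i, ξ i ω • v i‖ ^ 2 =
      ‖c‖ ^ 2 + ∑ i, ξ i ω * (2 * ⟪c, v i⟫) + ∑ i, ∑ j, ξ i ω * ξ j ω * ⟪v i, v j⟫ := by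
    rw [norm_add_sq_real, ← real_inner_self_eq_norm_sq (∑ i, ξ i ω • v i)]
    simp only [inner_sum, sum_inner, real_inner_smul_left, real_inner_smul_right, Finset.mul_sum]
    refine congrArg₂ _ (congrArg₂ _ rfl ?_) ?_
    · exact Finset.sum_congr rfl fun _ _ => by ring
    · refine Finset.sum_congr rfl fun i _ => Finset.sum_congr rfl fun j _ => ?_
      rw [real_inner_comm]
      ring
  simp only [hexpand]
  rw [integral_add, integral_add, integral_finsetSum, integral_finsetSum]
  · simp [integral_finsetSum, hint2, Integrable.mul_const, integral_mul_const, hmean, hcov,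
      Finset.mul_sum]
  all_goals fun_prop (disch := assumption)

end Noise

/-! ### Additive matrices and their nonnegative cone -/

section Additive

variable {ι : Type*}

/-- Real `ι × ι` matrices with the Frobenius inner product. -/
abbrev EuclideanMatrix (ι : Type*) := EuclideanSpace ℝ (ι × ι)

/-- The all-ones matrix. -/
def onesMatrix (ι : Type*) : EuclideanMatrix ι := WithLp.toLp 2 fun _ => 1

@[simp] theorem onesMatrix_apply (e : ι × ι) : onesMatrix ι e = 1 := rfl

/-- The matrices of the form `w i + w' j`, the linear span of the cone `𝒦` on which the queues
concentrate. -/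
def additiveMatrices (ι : Type*) : Submodule ℝ (EuclideanMatrix ι) where
  carrier := {x | ∃ w w' : ι → ℝ, ∀ i j, x (i, j) = w i + w' j}
  add_mem' := by
    rintro x y ⟨w, w', hx⟩ ⟨v, v', hy⟩
    exact ⟨w + v, w' + v', fun i j => by simp only [PiLp.add_apply, hx, hy, Pi.add_apply]; ring⟩
  zero_mem' := ⟨0, 0, fun _ _ => by simp⟩
  smul_mem' := by
    rintro r x ⟨w, w', hx⟩
    exact ⟨r • w, r • w', fun i j => by simp [hx, mul_add]⟩

theorem onesMatrix_mem_additiveMatrices : onesMatrix ι ∈ additiveMatrices ι :=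
  ⟨1, 0, fun _ _ => by simp⟩

variable [Fintype ι]

/-- The cone `𝒦` of nonnegative additive matrices; equivalently, the matrices `w i + w' j` with
`w, w' ≥ 0`. -/
def additiveCone (ι : Type*) [Fintype ι] : ProperCone ℝ (EuclideanMatrix ι) where
  carrier := {x | x ∈ additiveMatrices ι ∧ ∀ e, 0 ≤ x e}
  add_mem' hx hy := ⟨add_mem hx.1 hy.1, fun e => add_nonneg (hx.2 e) (hy.2 e)⟩
  zero_mem' := ⟨zero_mem _, fun _ => le_rfl⟩
  smul_mem' r _ hx := ⟨Submodule.smul_mem _ (r : ℝ) hx.1, fun e => mul_nonneg r.2 (hx.2 e)⟩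
  isClosed' := by
    have hnonneg : IsClosed {x : EuclideanMatrix ι | ∀ e, 0 ≤ x e} := by
      rw [Set.ofPred_forall]
      exact isClosed_iInter fun e => isClosed_le continuous_const (by fun_prop)
    exact (additiveMatrices ι).closed_of_finiteDimensional.inter hnonneg

theorem mem_additiveCone {x : EuclideanMatrix ι} :
    x ∈ additiveCone ι ↔ x ∈ additiveMatrices ι ∧ ∀ e, 0 ≤ x e :=
  Iff.rfl

theorem inner_eq_sum_sum (x y : EuclideanMatrix ι) :
    ⟪x, y⟫ = ∑ i, ∑ j, x (i, j) * y (i, j) := by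
  simp [PiLp.inner_apply, Fintype.sum_prod_type, mul_comm]

theorem norm_onesMatrix : ‖onesMatrix ι‖ = Fintype.card ι := by
  simp [EuclideanSpace.norm_eq]

theorem mem_orthogonal_additiveMatrices {z : EuclideanMatrix ι}
    (hrow : ∀ i, ∑ j, z (i, j) = 0) (hcol : ∀ j, ∑ i, z (i, j) = 0) :
    z ∈ (additiveMatrices ι)ᗮ := by
  rintro x ⟨w, w', hx⟩
  have hw : ∑ i, ∑ j, w i * z (i, j) = 0 := by simp [← Finset.mul_sum, hrow]
  have hw' : ∑ i, ∑ j, w' j * z (i, j) = 0 := by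
    rw [Finset.sum_comm]; simp [← Finset.mul_sum, hcol]
  simp only [inner_eq_sum_sum, hx, add_mul, Finset.sum_add_distrib, hw, hw', add_zero]

theorem starProjection_additiveMatrices_apply (x : EuclideanMatrix ι) (i j : ι) :
    (additiveMatrices ι).starProjection x (i, j) =
      (∑ l, x (i, l)) / Fintype.card ι + (∑ k, x (k, j)) / Fintype.card ι -
        (∑ k, ∑ l, x (k, l)) / Fintype.card ι ^ 2 := by
  have hn : (Fintype.card ι : ℝ) ≠ 0 := Nat.cast_ne_zero.2 (Fintype.card_pos_iff.2 ⟨i⟩).ne'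
  let z : EuclideanMatrix ι := WithLp.toLp 2 fun e =>
    (∑ l, x (e.1, l)) / Fintype.card ι + (∑ k, x (k, e.2)) / Fintype.card ι -
      (∑ k, ∑ l, x (k, l)) / Fintype.card ι ^ 2
  have hz : z ∈ additiveMatrices ι :=
    ⟨fun i => (∑ l, x (i, l)) / Fintype.card ι, fun j => (∑ k, x (k, j)) / Fintype.card ι -
      (∑ k, ∑ l, x (k, l)) / Fintype.card ι ^ 2, fun i j => add_sub_assoc _ _ _⟩
  have hxz : x - z ∈ (additiveMatrices ι)ᗮ := by
    refine mem_orthogonal_additiveMatrices (fun i => ?_) fun j => ?_ <;>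
      simp only [z, PiLp.sub_apply, Finset.sum_sub_distrib, Finset.sum_add_distrib,
        Finset.sum_const, ← Finset.sum_div, Finset.card_univ, nsmul_eq_mul]
    · rw [Finset.sum_comm (f := fun j k => x (k, j))]; field_simp; ring
    · field_simp; ring
  exact congr($((Submodule.eq_starProjection_of_mem_orthogonal hz hxz)) (i, j))

theorem sum_norm_sq_starProjection_single [Nonempty ι] [DecidableEq ι] :
    ∑ e : ι × ι, ‖(additiveMatrices ι).starProjection (EuclideanSpace.single e 1)‖ ^ 2 =
      2 * Fintype.card ι - 1 := by
  have hn : (Fintype.card ι : ℝ) ≠ 0 := Nat.cast_ne_zero.2 Fintype.card_ne_zero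
  have hdiag (e : ι × ι) :
      ‖(additiveMatrices ι).starProjection (EuclideanSpace.single e 1)‖ ^ 2 =
        2 / Fintype.card ι - 1 / Fintype.card ι ^ 2 := by
    obtain ⟨i, j⟩ := e
    rw [← real_inner_self_eq_norm_sq, Submodule.inner_starProjection_left_eq_right,
      Submodule.starProjection_eq_self_iff.2 (Submodule.starProjection_apply_mem _ _),
      real_inner_comm]
    simp only [EuclideanSpace.inner_single_right, starProjection_additiveMatrices_apply,
      PiLp.single_apply, Prod.ext_iff, true_and, and_true, ite_and, Finset.sum_ite_irrel,
      Finset.sum_ite_eq', Finset.sum_const_zero, Finset.mem_univ, ↓reduceIte,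
      Real.ringHom_apply]
    ring
  simp only [hdiag, Finset.sum_const, Finset.card_univ, Fintype.card_prod, nsmul_eq_mul]
  push_cast
  field_simp

theorem norm_sub_starProjection_le_infDist_additiveCone (x : EuclideanMatrix ι) :
    ‖x - (additiveMatrices ι).starProjection x‖ ≤ infDist x (additiveCone ι) := by
  refine (le_infDist (additiveCone ι).nonempty).2 fun k hk => ?_
  rw [dist_eq_norm, Submodule.starProjection_minimal]
  exact ciInf_le ⟨0, Set.forall_mem_range.2 fun _ => norm_nonneg _⟩
    (⟨k, (mem_additiveCone.1 hk).1⟩ : additiveMatrices ι)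

end Additive

/-! ### MaxWeight against the polar cone -/

theorem sum_row_nonpos_of_polar {ι : Type*} [Fintype ι] {y : EuclideanMatrix ι}
    (hy : ∀ z ∈ additiveCone ι, ⟪y, z⟫ ≤ 0) (i : ι) : ∑ j, y (i, j) ≤ 0 := by
  classical
  simpa [inner_eq_sum_sum] using hy (WithLp.toLp 2 fun e => if e.1 = i then 1 else 0)
    ⟨⟨fun k => if k = i then 1 else 0, 0, fun _ _ => by simp⟩, fun e => by positivity⟩

theorem sum_col_nonpos_of_polar {ι : Type*} [Fintype ι] {y : EuclideanMatrix ι}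
    (hy : ∀ z ∈ additiveCone ι, ⟪y, z⟫ ≤ 0) (j : ι) : ∑ i, y (i, j) ≤ 0 := by
  classical
  simpa [inner_eq_sum_sum] using hy (WithLp.toLp 2 fun e => if e.2 = j then 1 else 0)
    ⟨⟨0, fun k => if k = j then 1 else 0, fun _ _ => by simp⟩, fun e => by positivity⟩

section Switch

variable {n : ℕ} {sched : (Fin n → Fin n → ℕ) → Fin n → Fin n → ℕ} {s : Fin n → Fin n → ℕ}

/-- Embedding of integer matrices (queues, arrivals, schedules) into the Euclidean space of real
matrices. -/
def queueVec (q : Fin n → Fin n → ℕ) : EuclideanMatrix (Fin n) :=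
  WithLp.toLp 2 fun e => (q e.1 e.2 : ℝ)

@[simp] theorem queueVec_apply (q : Fin n → Fin n → ℕ) (e : Fin n × Fin n) :
    queueVec q e = q e.1 e.2 := rfl

theorem isPerm_permMatrix (σ : Equiv.Perm (Fin n)) :
    IsPerm n fun i j => if σ i = j then 1 else 0 := by
  refine ⟨fun i j => by dsimp only; split_ifs <;> simp, fun i => by simp, fun j => ?_⟩
  simp [← Equiv.eq_symm_apply]

theorem IsMaxWeight.inner_le (hmw : IsMaxWeight n sched) (q : Fin n → Fin n → ℕ)
    {x : EuclideanMatrix (Fin n)} (h0 : ∀ e, 0 ≤ x e) (hrow : ∀ i, ∑ j, x (i, j) ≤ 1)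
    (hcol : ∀ j, ∑ i, x (i, j) ≤ 1) :
    ⟪queueVec q, x⟫ ≤ ⟪queueVec q, queueVec (sched q)⟫ := by
  obtain ⟨D, hD, hxD⟩ :=
    exists_doublyStochastic_ge (M := fun i j => x (i, j)) (fun i j => h0 (i, j)) hrow hcol
  simp only [inner_eq_sum_sum, queueVec_apply]
  calc ∑ i, ∑ j, (q i j : ℝ) * x (i, j)
      ≤ ∑ i, ∑ j, (q i j : ℝ) * D i j := by gcongr with i _ j _; exact hxD i j
    _ ≤ ∑ i, ∑ j, (q i j : ℝ) * sched q i j := by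
      refine sum_mul_le_of_mem_doublyStochastic (w := fun i j => (q i j : ℝ)) hD fun σ => ?_
      have hσ := (hmw q).2 _ (isPerm_permMatrix σ)
      simpa [Equiv.Perm.permMatrix, PEquiv.toMatrix_apply, eq_comm] using
        (Nat.cast_le (α := ℝ)).2 hσ

theorem IsPerm.sub_ones_mem_orthogonal (hs : IsPerm n s) :
    queueVec s - (n : ℝ)⁻¹ • onesMatrix (Fin n) ∈ (additiveMatrices (Fin n))ᗮ := by
  have hn (i : Fin n) : (n : ℝ) ≠ 0 := Nat.cast_ne_zero.2 i.pos.ne'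
  have hrow (i) : ∑ j, (s i j : ℝ) = 1 := mod_cast hs.2.1 i
  have hcol (j) : ∑ i, (s i j : ℝ) = 1 := mod_cast hs.2.2 j
  refine mem_orthogonal_additiveMatrices (fun i => ?_) fun j => ?_
  · simp [hrow, mul_inv_cancel₀ (hn i)]
  · simp [hcol, mul_inv_cancel₀ (hn j)]

theorem inner_ones_le_card_mul_norm (x : EuclideanMatrix (Fin n)) :
    |⟪x, onesMatrix (Fin n)⟫| ≤ n * ‖x‖ := by
  simpa [norm_onesMatrix, mul_comm] using abs_real_inner_le_norm x (onesMatrix (Fin n))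

theorem IsMaxWeight.inner_ones_sub_le (hmw : IsMaxWeight n sched) (q : Fin n → Fin n → ℕ)
    {k : EuclideanMatrix (Fin n)} (hk : k ∈ additiveCone (Fin n))
    (horth : ⟪queueVec q - k, k⟫ = 0)
    (hpolar : ∀ z ∈ additiveCone (Fin n), ⟪queueVec q - k, z⟫ ≤ 0) :
    ⟪queueVec q - k, (n : ℝ)⁻¹ • onesMatrix (Fin n) - queueVec (sched q)⟫ ≤
      -(‖queueVec q - k‖ / n) := by
  set y := queueVec q - k with hy
  set v : EuclideanMatrix (Fin n) := (n : ℝ)⁻¹ • onesMatrix (Fin n)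
  have hnn : ∀ e, 0 ≤ (v + (n * ‖y‖)⁻¹ • y) e := fun e => by
    have hle : -y e / ‖y‖ ≤ 1 :=
      div_le_one_of_le₀ ((neg_le_abs _).trans (PiLp.norm_apply_le y e)) (norm_nonneg y)
    have := mul_nonneg (inv_nonneg.2 n.cast_nonneg) (sub_nonneg.2 hle)
    simpa [v, mul_add, div_eq_inv_mul, mul_assoc, mul_comm ‖y‖⁻¹] using this
  have hmax := hmw.inner_le q hnn
    (fun i => by
      have hn : (n : ℝ) * (n : ℝ)⁻¹ = 1 := mul_inv_cancel₀ (Nat.cast_ne_zero.2 i.pos.ne')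
      have := mul_nonpos_of_nonneg_of_nonpos (by positivity : 0 ≤ (n * ‖y‖)⁻¹)
        (sum_row_nonpos_of_polar hpolar i)
      simpa [v, Finset.sum_add_distrib, hn, ← Finset.mul_sum] using this)
    (fun j => by
      have hn : (n : ℝ) * (n : ℝ)⁻¹ = 1 := mul_inv_cancel₀ (Nat.cast_ne_zero.2 j.pos.ne')
      have := mul_nonpos_of_nonneg_of_nonpos (by positivity : 0 ≤ (n * ‖y‖)⁻¹)
        (sum_col_nonpos_of_polar hpolar j)
      simpa [v, Finset.sum_add_distrib, hn, ← Finset.mul_sum] using this)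
  have hks : ⟪k, queueVec (sched q) - v⟫ = 0 := (hmw q).1.sub_ones_mem_orthogonal k hk.1
  have hyy : (n * ‖y‖)⁻¹ * ‖y‖ ^ 2 = ‖y‖ / n := by
    rcases eq_or_ne ‖y‖ 0 with h | h
    · simp [h]
    · field_simp
  have hq : queueVec q = y + k := by simp [hy]
  rw [real_inner_comm] at horth
  rw [inner_sub_right] at hks
  simp only [hq, inner_add_left, inner_add_right, inner_sub_right, real_inner_smul_right,
    real_inner_self_eq_norm_sq, hyy, horth] at hmax ⊢
  linarith

end Switch

/-! ### Bernoulli arrivals -/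

section Arrivals

variable {n : ℕ} {p : unitInterval} {sched : (Fin n → Fin n → ℕ) → Fin n → Fin n → ℕ}

/-- The arrival matrix encoded by the set of port pairs which receive a packet. The finite type of
patterns makes every function of the arrivals integrable. -/
def arrivals (ω : Fin n × Fin n → Bool) : Fin n → Fin n → ℕ := fun i j => (ω (i, j)).toNat

/-- The law of independent Bernoulli arrivals of rate `p`. -/
noncomputable abbrev arrivalMeasure (n : ℕ) (p : unitInterval) : Measure (Fin n × Fin n → Bool) :=
  Measure.pi fun _ => bernoulliMeasure true false p

/-- One time slot of the switch, as a random map driven by the arrival pattern. -/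
def switchStep (sched : (Fin n → Fin n → ℕ) → Fin n → Fin n → ℕ)
    (x : (Fin n → Fin n → ℕ) × (Fin n × Fin n → Bool)) : Fin n → Fin n → ℕ :=
  nextQ n x.1 (arrivals x.2) (sched x.1)

theorem bernoulliMeasure_toNat_preimage (p : unitInterval) (k : ℕ) :
    bernoulliMeasure true false p {b | b.toNat = k} = bern p k := by
  have hcoe (r : unitInterval) : (unitInterval.toNNReal r : ℝ≥0∞) = ENNReal.ofReal r :=
    (ENNReal.ofReal_eq_coe_nnreal r.2.1).symm
  rw [bernoulliMeasure_apply p .of_discrete]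
  rcases k with _ | _ | k <;> simp [bern, hcoe]

theorem arrivalMeasure_arrivals_eq (a : Fin n → Fin n → ℕ) :
    arrivalMeasure n p {ω | arrivals ω = a} = jointA n (fun _ _ => bern p) a := by
  have : {ω | arrivals ω = a} = Set.univ.pi fun e : Fin n × Fin n => {b | b.toNat = a e.1 e.2} := by
    ext ω
    simp [funext_iff, arrivals]
  rw [this, Measure.pi_pi]
  simp [bernoulliMeasure_toNat_preimage, jointA, Fintype.prod_prod_type]

theorem arrivalMeasure_switchStep_eq (q q' : Fin n → Fin n → ℕ) :
    arrivalMeasure n p {ω | switchStep sched (q, ω) = q'} =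
      kernelMW n (fun _ _ => bern p) sched q q' := by
  classical
  set B : Set (Fin n → Fin n → ℕ) := {a | nextQ n q a (sched q) = q'}
  have hmap (a) : (arrivalMeasure n p).map arrivals {a} = jointA n (fun _ _ => bern p) a := by
    rw [Measure.map_apply .of_discrete .of_discrete, ← arrivalMeasure_arrivals_eq]
    rfl
  calc arrivalMeasure n p (arrivals ⁻¹' B)
      = (arrivalMeasure n p).map arrivals B := (Measure.map_apply .of_discrete .of_discrete).symm
    _ = ∑' a, B.indicator (fun a => (arrivalMeasure n p).map arrivals {a}) a :=
        (Measure.tsum_indicator_apply_singleton _ _ .of_discrete).symm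
    _ = kernelMW n (fun _ _ => bern p) sched q q' :=
        tsum_congr fun a => by simp [Set.indicator_apply, hmap, B]

theorem IsInvariant.measurePreserving {pd : (Fin n → Fin n → ℕ) → ℝ≥0∞}
    (h : IsInvariant n (kernelMW n (fun _ _ => bern p) sched) pd)
    {μ : Measure (Fin n → Fin n → ℕ)} (hμ : ∀ q, μ {q} = pd q) :
    MeasurePreserving (switchStep sched) (μ.prod (arrivalMeasure n p)) μ := by
  refine ⟨.of_discrete, Measure.ext_of_singleton fun q' => ?_⟩
  rw [Measure.map_apply .of_discrete .of_discrete, Measure.prod_apply .of_discrete,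
    lintegral_countable', hμ, ← h.2 q']
  refine tsum_congr fun q => ?_
  rw [hμ, mul_comm, ← arrivalMeasure_switchStep_eq]
  rfl

theorem integral_arrival (f : Bool → ℝ) (e : Fin n × Fin n) :
    ∫ ω, f (ω e) ∂arrivalMeasure n p = p * f true + (1 - p) * f false := by
  rw [integral_comp_eval .of_discrete, integral_bernoulliMeasure]
  rfl

theorem integral_arrival_mul {e e' : Fin n × Fin n} (h : e ≠ e') (f g : Bool → ℝ) :
    ∫ ω, f (ω e) * g (ω e') ∂arrivalMeasure n p =
      (∫ ω, f (ω e) ∂arrivalMeasure n p) * ∫ ω, g (ω e') ∂arrivalMeasure n p := by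
  have hindep : iIndepFun (fun e (ω : Fin n × Fin n → Bool) => ω e) (arrivalMeasure n p) :=
    iIndepFun_pi (X := fun _ => id) fun _ => aemeasurable_id
  exact ((hindep.indepFun h).comp .of_discrete .of_discrete).integral_mul_eq_mul_integral
    .of_discrete .of_discrete

/-- The centred arrival at the port pair `e`. -/
def arrivalNoise (p : ℝ) (ω : Fin n × Fin n → Bool) (e : Fin n × Fin n) : ℝ :=
  arrivals ω e.1 e.2 - p

theorem integral_arrivalNoise (e : Fin n × Fin n) :
    ∫ ω, arrivalNoise p ω e ∂arrivalMeasure n p = 0 := by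
  refine (integral_arrival (fun b => b.toNat - p) e).trans ?_
  simp only [Bool.toNat_true, Bool.toNat_false, Nat.cast_one, Nat.cast_zero]
  ring

theorem integral_arrivalNoise_mul (e e' : Fin n × Fin n) :
    ∫ ω, arrivalNoise p ω e * arrivalNoise p ω e' ∂arrivalMeasure n p =
      if e = e' then (p : ℝ) * (1 - p) else 0 := by
  split_ifs with h
  · subst h
    refine (integral_arrival (fun b => (b.toNat - p) * (b.toNat - p)) e).trans ?_
    simp only [Bool.toNat_true, Bool.toNat_false, Nat.cast_one, Nat.cast_zero]
    ring
  · refine (integral_arrival_mul h (fun b => b.toNat - p) fun b => b.toNat - p).trans ?_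
    exact mul_eq_zero_of_left (integral_arrivalNoise e) _

theorem integral_norm_add_sum_arrivalNoise_smul_sq {F : Type*} [NormedAddCommGroup F]
    [InnerProductSpace ℝ F] (c : F) (v : Fin n × Fin n → F) :
    ∫ ω, ‖c + ∑ e, arrivalNoise p ω e • v e‖ ^ 2 ∂arrivalMeasure n p =
      ‖c‖ ^ 2 + p * (1 - p) * ∑ e, ‖v e‖ ^ 2 :=
  integral_norm_add_sum_smul_sq (fun _ => .of_finite) (fun _ _ => .of_finite)
    integral_arrivalNoise integral_arrivalNoise_mul c v

end Arrivals

/-! ### Fourth-power drift and third moments -/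

section Switch

variable {n : ℕ} {p : unitInterval} {sched : (Fin n → Fin n → ℕ) → Fin n → Fin n → ℕ}
  {q s : Fin n → Fin n → ℕ}

/-- The sum of all entries of an integer matrix. -/
def total (q : Fin n → Fin n → ℕ) : ℕ := ∑ i, ∑ j, q i j

theorem inner_queueVec_ones (q : Fin n → Fin n → ℕ) :
    ⟪queueVec q, onesMatrix (Fin n)⟫ = total q := by
  simp [inner_eq_sum_sum, total]

theorem IsPerm.total_eq (hs : IsPerm n s) : total s = n := by
  simp [total, hs.2.1]

theorem arrivals_le_one (ω : Fin n × Fin n → Bool) (i j : Fin n) : arrivals ω i j ≤ 1 :=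
  Bool.toNat_le _

theorem queueVec_arrivals (p : ℝ) (ω : Fin n × Fin n → Bool) :
    queueVec (arrivals ω) = p • onesMatrix (Fin n) +
      ∑ e, arrivalNoise p ω e • EuclideanSpace.single e 1 := by
  ext e
  simp [arrivalNoise, Finset.sum_apply, Pi.single_apply]

theorem total_arrivals (p : ℝ) (ω : Fin n × Fin n → Bool) :
    (total (arrivals ω) : ℝ) = n ^ 2 * p + ∑ e, arrivalNoise p ω e := by
  simp only [total, Nat.cast_sum, arrivalNoise, Finset.sum_sub_distrib, Fintype.sum_prod_type,
    Finset.sum_const, Finset.card_univ, Fintype.card_prod, Fintype.card_fin, nsmul_eq_mul,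
    Nat.cast_mul]
  ring

theorem integral_total_arrivals_add (c : ℝ) :
    ∫ ω, (total (arrivals ω) + c : ℝ) ∂arrivalMeasure n p = n ^ 2 * p + c := by
  simp only [total_arrivals p]
  rw [integral_add .of_finite .of_finite, integral_add .of_finite .of_finite,
    integral_finsetSum _ fun _ _ => .of_finite]
  simp [integral_arrivalNoise]

theorem integral_total_arrivals_add_sq (c : ℝ) :
    ∫ ω, (total (arrivals ω) + c : ℝ) ^ 2 ∂arrivalMeasure n p =
      (n ^ 2 * p + c) ^ 2 + n ^ 2 * (p * (1 - p)) := by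
  have h := integral_norm_add_sum_arrivalNoise_smul_sq (n := n) (p := p) (n ^ 2 * p + c : ℝ)
    fun _ => (1 : ℝ)
  simp only [Real.norm_eq_abs, sq_abs, smul_eq_mul, mul_one] at h
  simp only [total_arrivals p, add_right_comm _ _ c, h]
  simp only [one_pow, Finset.sum_const, Finset.card_univ, Fintype.card_prod, Fintype.card_fin,
    nsmul_eq_mul, Nat.cast_mul]
  ring

theorem integral_inner_arrivals_sub (y : EuclideanMatrix (Fin n)) (s : Fin n → Fin n → ℕ) :
    ∫ ω, ⟪y, queueVec (arrivals ω) - queueVec s⟫ ∂arrivalMeasure n p =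
      ⟪y, (p : ℝ) • onesMatrix (Fin n) - queueVec s⟫ := by
  rw [integral_inner .of_finite, integral_sub .of_finite .of_finite]
  simp only [queueVec_arrivals p]
  rw [integral_add .of_finite .of_finite, integral_finsetSum _ fun _ _ => .of_finite]
  simp [integral_smul_const, integral_arrivalNoise]

theorem norm_arrivals_sub_sq_le (hs : IsPerm n s) (ω : Fin n × Fin n → Bool) :
    ‖queueVec (arrivals ω) - queueVec s‖ ^ 2 ≤ total (arrivals ω) + n := by
  have hle (a b : ℕ) (ha : a ≤ 1) (hb : b ≤ 1) : ((a : ℝ) - b) ^ 2 ≤ a + b := by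
    interval_cases a <;> interval_cases b <;> norm_num
  calc ‖queueVec (arrivals ω) - queueVec s‖ ^ 2
      = ∑ i, ∑ j, ((arrivals ω i j : ℝ) - s i j) ^ 2 := by
        simp [EuclideanSpace.real_norm_sq_eq, Fintype.sum_prod_type]
    _ ≤ ∑ i, ∑ j, ((arrivals ω i j : ℝ) + s i j) := by
        gcongr with i _ j _; exact hle _ _ (arrivals_le_one ω i j) (hs.1 i j)
    _ = total (arrivals ω) + n := by
        rw [← congrArg (Nat.cast (R := ℝ)) hs.total_eq]
        simp [total, Finset.sum_add_distrib]

theorem integral_norm_add_arrivals_sub_pow_four_le (hp : n * (p : ℝ) ≤ 1) (hs : IsPerm n s)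
    (y : EuclideanMatrix (Fin n)) :
    ∫ ω, ‖y + (queueVec (arrivals ω) - queueVec s)‖ ^ 4 ∂arrivalMeasure n p ≤
      ‖y‖ ^ 4 + 4 * ‖y‖ ^ 2 * ⟪y, (p : ℝ) • onesMatrix (Fin n) - queueVec s⟫ +
        20 * n * ‖y‖ ^ 2 + 10 * n ^ 2 := by
  have hpoint (ω : Fin n × Fin n → Bool) :
      ‖y + (queueVec (arrivals ω) - queueVec s)‖ ^ 4 ≤
        ‖y‖ ^ 4 + 4 * ‖y‖ ^ 2 * ⟪y, queueVec (arrivals ω) - queueVec s⟫ +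
          10 * ‖y‖ ^ 2 * (total (arrivals ω) + n) + 2 * (total (arrivals ω) + n) ^ 2 :=
    (norm_add_pow_four_le _ _).trans (by gcongr <;> exact norm_arrivals_sub_sq_le hs ω)
  have hnp : (n : ℝ) ^ 2 * p ≤ n := by
    simpa [sq, mul_assoc] using mul_le_mul_of_nonneg_left hp n.cast_nonneg
  have hp0 : (0 : ℝ) ≤ n ^ 2 * p := mul_nonneg (sq_nonneg _) p.2.1
  have hn2 : (n : ℝ) ≤ n ^ 2 := mod_cast Nat.le_self_pow two_ne_zero n
  have hvar : (n : ℝ) ^ 2 * (p * (1 - p)) ≤ n ^ 2 := by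
    nlinarith [mul_nonneg hp0 p.2.1]
  have hsq : ((n : ℝ) ^ 2 * p + n) ^ 2 ≤ (2 * n) ^ 2 :=
    pow_le_pow_left₀ (by positivity) (by linarith) 2
  refine (integral_mono .of_finite .of_finite hpoint).trans ?_
  rw [integral_add .of_finite .of_finite, integral_add .of_finite .of_finite,
    integral_add .of_finite .of_finite, integral_const_mul, integral_const_mul,
    integral_const_mul, integral_inner_arrivals_sub, integral_total_arrivals_add,
    integral_total_arrivals_add_sq]
  have h1 : 10 * ‖y‖ ^ 2 * (n ^ 2 * p + n) ≤ 10 * ‖y‖ ^ 2 * (2 * n) := by gcongr; linarith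
  simp only [integral_const, probReal_univ, one_smul]
  linarith

theorem infDist_nextQ_le {C : Set (EuclideanMatrix (Fin n))} {k : EuclideanMatrix (Fin n)}
    (hk : k ∈ C) (hk0 : ∀ e, 0 ≤ k e) (q a s : Fin n → Fin n → ℕ) :
    infDist (queueVec (nextQ n q a s)) C ≤
      ‖(queueVec q - k) + (queueVec a - queueVec s)‖ := by
  refine (infDist_le_dist_of_mem hk).trans ?_
  rw [dist_eq_norm, EuclideanSpace.norm_eq, EuclideanSpace.norm_eq]
  refine Real.sqrt_le_sqrt (Finset.sum_le_sum fun e _ => ?_)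
  have habs := abs_natCast_sub_sub_le (q e.1 e.2 + a e.1 e.2) (s e.1 e.2) (hk0 e)
  rw [show ((q e.1 e.2 + a e.1 e.2 : ℕ) : ℝ) - s e.1 e.2 - k e =
    (q e.1 e.2 - k e) + (a e.1 e.2 - s e.1 e.2) by push_cast; ring] at habs
  exact pow_le_pow_left₀ (norm_nonneg _) habs 2

theorem integral_infDist_switchStep_pow_four_le (hp : n * (p : ℝ) ≤ 1)
    (hs : IsPerm n (sched q)) {C : Set (EuclideanMatrix (Fin n))} {k : EuclideanMatrix (Fin n)}
    (hk : k ∈ C) (hk0 : ∀ e, 0 ≤ k e) {δ : ℝ} (hδ0 : 0 < δ) (hδ1 : δ ≤ 1)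
    (hneg : ⟪queueVec q - k, (p : ℝ) • onesMatrix (Fin n) - queueVec (sched q)⟫ ≤
      -(δ * ‖queueVec q - k‖)) :
    ∫ ω, infDist (queueVec (switchStep sched (q, ω))) C ^ 4 ∂arrivalMeasure n p ≤
      ‖queueVec q - k‖ ^ 4 - δ * ‖queueVec q - k‖ ^ 3 + 900 * n ^ 3 / δ ^ 2 := by
  set y := queueVec q - k
  have hstep : ∫ ω, infDist (queueVec (switchStep sched (q, ω))) C ^ 4 ∂arrivalMeasure n p ≤
      ∫ ω, ‖y + (queueVec (arrivals ω) - queueVec (sched q))‖ ^ 4 ∂arrivalMeasure n p :=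
    integral_mono .of_finite .of_finite fun ω =>
      pow_le_pow_left₀ infDist_nonneg (infDist_nextQ_le hk hk0 _ _ _) 4
  have hyoung := mul_sq_le_mul_cube_add (a := 20 * n) (x := ‖y‖) (δ := 3 * δ) (by positivity)
    (norm_nonneg y) (by positivity)
  have hconst : (10 : ℝ) * n ^ 2 ≤ 10 * n ^ 3 / δ ^ 2 := by
    have hn : (n : ℝ) ^ 2 ≤ n ^ 3 := by
      rcases n.eq_zero_or_pos with rfl | hpos
      · simp
      · exact_mod_cast Nat.pow_le_pow_right hpos (by norm_num)
    rw [le_div_iff₀ (by positivity)]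
    nlinarith [pow_le_one₀ hδ0.le hδ1 (n := 2), sq_nonneg (n : ℝ)]
  have hinner := mul_le_mul_of_nonneg_left hneg (sq_nonneg ‖y‖)
  have hquart := integral_norm_add_arrivals_sub_pow_four_le hp hs y
  have hsplit : (20 * n : ℝ) ^ 3 / (3 * δ) ^ 2 + 10 * n ^ 3 / δ ^ 2 ≤ 900 * n ^ 3 / δ ^ 2 := by
    rw [show (20 * n : ℝ) ^ 3 / (3 * δ) ^ 2 = 8000 / 9 * n ^ 3 / δ ^ 2 by field_simp; ring,
      ← add_div]
    gcongr
    linarith [show (0 : ℝ) ≤ n ^ 3 by positivity]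
  linarith

theorem integral_infDist_cube_le {μ : Measure (Fin n → Fin n → ℕ)} [IsProbabilityMeasure μ]
    (hμ : MeasurePreserving (switchStep sched) (μ.prod (arrivalMeasure n p)) μ)
    (hperm : ∀ q, IsPerm n (sched q)) (hp : n * (p : ℝ) ≤ 1)
    {C : Set (EuclideanMatrix (Fin n))} (hC : ∀ k ∈ C, ∀ e, 0 ≤ k e)
    {δ : ℝ} (hδ0 : 0 < δ) (hδ1 : δ ≤ 1)
    (hdrift : ∀ q, ∃ k ∈ C, infDist (queueVec q) C = ‖queueVec q - k‖ ∧
      ⟪queueVec q - k, (p : ℝ) • onesMatrix (Fin n) - queueVec (sched q)⟫ ≤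
        -(δ * ‖queueVec q - k‖)) :
    Integrable (fun q => infDist (queueVec q) C ^ 3) μ ∧
      ∫ q, infDist (queueVec q) C ^ 3 ∂μ ≤ 900 * (n / δ) ^ 3 := by
  have hLyap (q : Fin n → Fin n → ℕ) :
      ∫ ω, infDist (queueVec (switchStep sched (q, ω))) C ^ 4 ∂arrivalMeasure n p ≤
        infDist (queueVec q) C ^ 4 - δ * infDist (queueVec q) C ^ 3 + 900 * n ^ 3 / δ ^ 2 := by
    obtain ⟨k, hk, hdist, hneg⟩ := hdrift q
    rw [hdist]
    exact integral_infDist_switchStep_pow_four_le hp (hperm q) hk (hC k hk) hδ0 hδ1 hneg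
  obtain ⟨hint, hle⟩ := integrable_and_integral_le_of_drift hμ
    (f := fun q => infDist (queueVec q) C ^ 4) (g := fun q => δ * infDist (queueVec q) C ^ 3)
    .of_discrete .of_discrete (fun q => pow_nonneg infDist_nonneg 4)
    (fun q => mul_nonneg hδ0.le (pow_nonneg infDist_nonneg 3)) (by positivity)
    (fun q => .of_finite) hLyap
  refine ⟨(integrable_const_mul_iff hδ0.ne'.isUnit _).1 hint, ?_⟩
  rw [integral_const_mul] at hle
  calc ∫ q, infDist (queueVec q) C ^ 3 ∂μ ≤ 900 * n ^ 3 / δ ^ 2 / δ := by rwa [le_div_iff₀' hδ0]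
    _ = 900 * (n / δ) ^ 3 := by field_simp

end Switch

/-! ### Unused service and the drift of the projected queue -/

section Switch

variable {n : ℕ} {p : unitInterval} {sched : (Fin n → Fin n → ℕ) → Fin n → Fin n → ℕ}
  {s : Fin n → Fin n → ℕ} {ε : ℝ}

theorem norm_queueVec_le_total (q : Fin n → Fin n → ℕ) : ‖queueVec q‖ ≤ total q := by
  have h : ‖queueVec q‖ ^ 2 ≤ (total q : ℝ) ^ 2 := by
    simpa [EuclideanSpace.real_norm_sq_eq, total, Fintype.sum_prod_type] using
      Finset.sum_sq_le_sq_sum_of_nonneg (s := Finset.univ) (f := fun e => queueVec q e)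
        fun e _ => by simp
  exact le_of_sq_le_sq h (Nat.cast_nonneg _)

theorem total_le_card_mul_norm (q : Fin n → Fin n → ℕ) : (total q : ℝ) ≤ n * ‖queueVec q‖ :=
  inner_queueVec_ones q ▸ (le_abs_self _).trans (inner_ones_le_card_mul_norm _)

theorem IsMaxWeight.inner_arrivalRate_sub_le (hmw : IsMaxWeight n sched)
    (hp : (p : ℝ) = (1 - ε) / n) (hε : 0 ≤ ε) (q : Fin n → Fin n → ℕ) :
    ⟪queueVec q, (p : ℝ) • onesMatrix (Fin n) - queueVec (sched q)⟫ ≤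
      -(ε / n * ‖queueVec q‖) := by
  have hn (i : Fin n) : (n : ℝ) * (n : ℝ)⁻¹ = 1 := mul_inv_cancel₀ (Nat.cast_ne_zero.2 i.pos.ne')
  have hmax := hmw.inner_le q (x := (n : ℝ)⁻¹ • onesMatrix (Fin n)) (fun e => by simp)
    (fun i => by simp [hn i]) (fun j => by simp [hn j])
  have hnorm := mul_le_mul_of_nonneg_left (norm_queueVec_le_total q)
    (div_nonneg hε n.cast_nonneg)
  rw [real_inner_smul_right, inner_queueVec_ones] at hmax
  rw [inner_sub_right, real_inner_smul_right, inner_queueVec_ones, hp, sub_div, one_div]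
  linarith

theorem IsMaxWeight.inner_sub_arrivalRate_sub_le (hmw : IsMaxWeight n sched)
    (hp : (p : ℝ) = (1 - ε) / n) (hε : 0 ≤ ε) (hε' : ε ≤ 1 / (2 * n)) (q : Fin n → Fin n → ℕ)
    {k : EuclideanMatrix (Fin n)} (hk : k ∈ additiveCone (Fin n))
    (horth : ⟪queueVec q - k, k⟫ = 0)
    (hpolar : ∀ z ∈ additiveCone (Fin n), ⟪queueVec q - k, z⟫ ≤ 0) :
    ⟪queueVec q - k, (p : ℝ) • onesMatrix (Fin n) - queueVec (sched q)⟫ ≤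
      -(1 / (2 * n) * ‖queueVec q - k‖) := by
  set y := queueVec q - k
  have hdrift := hmw.inner_ones_sub_le q hk horth hpolar
  have hones := neg_le_of_abs_le (inner_ones_le_card_mul_norm y)
  have hcorr : -(ε / n * ⟪y, onesMatrix (Fin n)⟫) ≤ ε * ‖y‖ := by
    rcases n.eq_zero_or_pos with rfl | hn
    · simpa using mul_nonneg hε (norm_nonneg y)
    · calc -(ε / n * ⟪y, onesMatrix (Fin n)⟫) ≤ ε / n * (n * ‖y‖) := by
            rw [← mul_neg]; gcongr; linarith
        _ = ε * ‖y‖ := by field_simp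
  have hsmall := mul_le_mul_of_nonneg_right hε' (norm_nonneg y)
  rw [inner_sub_right, real_inner_smul_right] at hdrift ⊢
  rw [hp, sub_div, sub_mul, one_div]
  linarith [show ‖y‖ / n = 2 * (1 / (2 * n) * ‖y‖) by field_simp]

/-- The service offered to empty queues, `u` in the recursion `q⁺ = q + a - s + u`. -/
def unusedService (q a s : Fin n → Fin n → ℕ) : Fin n → Fin n → ℕ :=
  fun i j => s i j - (q i j + a i j)

theorem queueVec_nextQ_sub_unusedService (q a s : Fin n → Fin n → ℕ) :
    queueVec (nextQ n q a s) - queueVec (unusedService q a s) =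
      queueVec q + (queueVec a - queueVec s) := by
  ext e
  simp only [PiLp.sub_apply, PiLp.add_apply, queueVec_apply, nextQ, unusedService]
  rcases le_total (s e.1 e.2) (q e.1 e.2 + a e.1 e.2) with h | h
  · rw [Nat.cast_sub h, Nat.sub_eq_zero_of_le h]; push_cast; ring
  · rw [Nat.cast_sub h, Nat.sub_eq_zero_of_le h]; push_cast; ring

theorem inner_nextQ_unusedService (q a s : Fin n → Fin n → ℕ) :
    ⟪queueVec (nextQ n q a s), queueVec (unusedService q a s)⟫ = 0 := by
  rw [inner_eq_sum_sum]
  refine Finset.sum_eq_zero fun i _ => Finset.sum_eq_zero fun j _ => ?_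
  rcases le_total (s i j) (q i j + a i j) with h | h
  · simp [unusedService, Nat.sub_eq_zero_of_le h]
  · simp [nextQ, Nat.sub_eq_zero_of_le h]

theorem norm_unusedService_sq (hs : IsPerm n s) (q a : Fin n → Fin n → ℕ) :
    ‖queueVec (unusedService q a s)‖ ^ 2 = total (unusedService q a s) := by
  have hsq (i j) : ((unusedService q a s i j : ℕ) : ℝ) ^ 2 = unusedService q a s i j := by
    have hle : unusedService q a s i j ≤ 1 := (Nat.sub_le _ _).trans (hs.1 i j)
    interval_cases unusedService q a s i j <;> norm_num
  simp [EuclideanSpace.real_norm_sq_eq, Fintype.sum_prod_type, hsq, total]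

theorem total_unusedService (hs : IsPerm n s) (q a : Fin n → Fin n → ℕ) :
    (total (unusedService q a s) : ℝ) = total (nextQ n q a s) - total q - (total a - n) := by
  have h := congr(⟪$(queueVec_nextQ_sub_unusedService q a s), onesMatrix (Fin n)⟫)
  simp only [inner_sub_left, inner_add_left, inner_queueVec_ones, hs.total_eq] at h
  linarith

theorem abs_norm_starProjection_nextQ_sq_sub_le (hs : IsPerm n s) (q a : Fin n → Fin n → ℕ)
    {m : ℝ} (hm : 0 < m) :
    |‖(additiveMatrices (Fin n)).starProjection (queueVec (nextQ n q a s))‖ ^ 2 -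
        ‖(additiveMatrices (Fin n)).starProjection (queueVec q + (queueVec a - queueVec s))‖ ^ 2| ≤
      2 / m ^ 2 * infDist (queueVec (nextQ n q a s)) (additiveCone (Fin n)) ^ 3 +
        (2 * m + 1) * total (unusedService q a s) := by
  set u := queueVec (unusedService q a s)
  have hu : ‖u‖ ^ 2 = total (unusedService q a s) := norm_unusedService_sq hs q a
  have hv : ‖u‖ = 0 ∨ 1 ≤ ‖u‖ := by
    rcases (total (unusedService q a s)).eq_zero_or_pos with h | h
    · exact .inl (pow_eq_zero_iff two_ne_zero |>.1 (by simpa [h] using hu))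
    · exact .inr ((one_le_sq_iff₀ (norm_nonneg u)).1 (hu ▸ Nat.one_le_cast.2 h))
  have hproj := abs_norm_starProjection_sq_sub_le (additiveMatrices (Fin n))
    (inner_nextQ_unusedService q a s)
  rw [queueVec_nextQ_sub_unusedService] at hproj
  have hdist := norm_sub_starProjection_le_infDist_additiveCone (queueVec (nextQ n q a s))
  set X := infDist (queueVec (nextQ n q a s)) (additiveCone (Fin n))
  calc _ ≤ _ := hproj
    _ ≤ 2 * (X * ‖u‖) + ‖u‖ ^ 2 := by
      rw [mul_assoc]; gcongr
    _ ≤ 2 * (X ^ 3 / m ^ 2 + m * ‖u‖ ^ 2) + ‖u‖ ^ 2 := by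
      gcongr; exact mul_le_cube_div_sq_add hm infDist_nonneg hv
    _ = 2 / m ^ 2 * X ^ 3 + (2 * m + 1) * total (unusedService q a s) := by rw [hu]; ring

theorem integral_norm_starProjection_arrivals_sq (hn : 1 ≤ n) (hp : (p : ℝ) = (1 - ε) / n)
    (hs : IsPerm n s) (q : Fin n → Fin n → ℕ) :
    ∫ ω, ‖(additiveMatrices (Fin n)).starProjection
        (queueVec q + (queueVec (arrivals ω) - queueVec s))‖ ^ 2 ∂arrivalMeasure n p =
      ‖(additiveMatrices (Fin n)).starProjection (queueVec q)‖ ^ 2 - 2 * (ε / n) * total q +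
        (ε ^ 2 + (2 * n - 1) * (p * (1 - p))) := by
  have : NeZero n := ⟨by omega⟩
  have hn0 : (n : ℝ) ≠ 0 := NeZero.ne _
  set P := (additiveMatrices (Fin n)).starProjection
  set c : EuclideanMatrix (Fin n) := (-(ε / n)) • onesMatrix (Fin n)
  have hPones : P (onesMatrix (Fin n)) = onesMatrix (Fin n) :=
    Submodule.starProjection_eq_self_iff.2 onesMatrix_mem_additiveMatrices
  have hPs : P (queueVec s) = (n : ℝ)⁻¹ • onesMatrix (Fin n) := by
    have := (Submodule.starProjection_apply_eq_zero_iff _).2 hs.sub_ones_mem_orthogonal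
    rwa [map_sub, map_smul, sub_eq_zero, hPones] at this
  have hdecomp (ω) : P (queueVec q + (queueVec (arrivals ω) - queueVec s)) =
      (P (queueVec q) + c) + ∑ e, arrivalNoise p ω e • P (EuclideanSpace.single e 1) := by
    rw [queueVec_arrivals p]
    simp only [map_add, map_sub, map_smul, map_sum, hPones, hPs, hp, c, sub_div]
    module
  have hinner : ⟪P (queueVec q), onesMatrix (Fin n)⟫ = total q := by
    rw [Submodule.inner_starProjection_left_eq_right, hPones, inner_queueVec_ones]
  simp only [hdecomp]
  rw [integral_norm_add_sum_arrivalNoise_smul_sq, sum_norm_sq_starProjection_single,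
    norm_add_sq_real, real_inner_smul_right, hinner, norm_smul, mul_pow, norm_onesMatrix,
    Real.norm_eq_abs, sq_abs, Fintype.card_fin]
  field_simp
  ring

end Switch

/-! ### Stationary moments -/

section Stationary

variable {n : ℕ} {p : unitInterval} {sched : (Fin n → Fin n → ℕ) → Fin n → Fin n → ℕ} {ε : ℝ}
  {μ : Measure (Fin n → Fin n → ℕ)} [IsProbabilityMeasure μ]

theorem integral_infDist_additiveCone_cube_le (hn : 1 ≤ n) (hp : (p : ℝ) = (1 - ε) / n)
    (hε : 0 ≤ ε) (hε' : ε ≤ 1 / (2 * n)) (hmw : IsMaxWeight n sched)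
    (hμ : MeasurePreserving (switchStep sched) (μ.prod (arrivalMeasure n p)) μ) :
    Integrable (fun q => infDist (queueVec q) (additiveCone (Fin n)) ^ 3) μ ∧
      ∫ q, infDist (queueVec q) (additiveCone (Fin n)) ^ 3 ∂μ ≤ 7200 * n ^ 6 := by
  have hn1 : (1 : ℝ) ≤ n := Nat.one_le_cast.2 hn
  have hδ : 1 / (2 * (n : ℝ)) ≤ 1 := (div_le_one (by positivity)).2 (by linarith)
  have hload : n * (p : ℝ) ≤ 1 := by rw [hp, mul_div_cancel₀ _ (by positivity)]; linarith
  have hmoment := integral_infDist_cube_le hμ (fun q => (hmw q).1) hload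
    (C := additiveCone (Fin n)) (fun k hk => (mem_additiveCone.1 hk).2) (by positivity) hδ
    fun q => by
      obtain ⟨k, hk, hdist, horth, hpolar⟩ :=
        exists_infDist_eq_norm_sub_properCone (additiveCone (Fin n)) (queueVec q)
      exact ⟨k, hk, hdist, hmw.inner_sub_arrivalRate_sub_le hp hε hε' q hk horth hpolar⟩
  refine ⟨hmoment.1, hmoment.2.trans_eq ?_⟩
  field_simp
  norm_num

theorem integrable_norm_queueVec_cube (hn : 1 ≤ n) (hp : (p : ℝ) = (1 - ε) / n)
    (hε : 0 < ε) (hε' : ε ≤ 1) (hmw : IsMaxWeight n sched)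
    (hμ : MeasurePreserving (switchStep sched) (μ.prod (arrivalMeasure n p)) μ) :
    Integrable (fun q => ‖queueVec q‖ ^ 3) μ := by
  have hn1 : (1 : ℝ) ≤ n := Nat.one_le_cast.2 hn
  have hload : n * (p : ℝ) ≤ 1 := by rw [hp, mul_div_cancel₀ _ (by positivity)]; linarith
  have hmoment := integral_infDist_cube_le hμ (fun q => (hmw q).1) hload (C := {0}) (by simp)
    (δ := ε / n) (by positivity) (div_le_one_of_le₀ (hε'.trans hn1) (by positivity))
    fun q => ⟨0, rfl, by simp, by simpa using hmw.inner_arrivalRate_sub_le hp hε.le q⟩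
  simpa using hmoment.1

theorem integrable_norm_starProjection_queueVec_sq
    (h : Integrable (fun q => ‖queueVec q‖ ^ 3) μ) :
    Integrable (fun q => ‖(additiveMatrices (Fin n)).starProjection (queueVec q)‖ ^ 2) μ := by
  refine .mono' (g := fun q => 1 + ‖queueVec q‖ ^ 3) ((integrable_const 1).add h) .of_discrete
    (.of_forall fun q => ?_)
  have hP := Submodule.norm_starProjection_apply_le (additiveMatrices (Fin n)) (queueVec q)
  rw [norm_pow, norm_norm]
  calc _ ≤ ‖queueVec q‖ ^ 2 := by gcongr
    _ ≤ 1 + ‖queueVec q‖ ^ 3 := by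
      nlinarith [sq_nonneg (‖queueVec q‖ - 1), norm_nonneg (queueVec q)]

theorem integrable_total (h : Integrable (fun q => ‖queueVec q‖ ^ 3) μ) :
    Integrable (fun q => (total q : ℝ)) μ := by
  refine .mono' (g := fun q => n * (1 + ‖queueVec q‖ ^ 3))
    (((integrable_const 1).add h).const_mul _) .of_discrete (.of_forall fun q => ?_)
  rw [Real.norm_natCast]
  refine (total_le_card_mul_norm q).trans (mul_le_mul_of_nonneg_left ?_ n.cast_nonneg)
  nlinarith [sq_nonneg (‖queueVec q‖ - 1), norm_nonneg (queueVec q)]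

theorem integrable_and_integral_total_unusedService (hn : 1 ≤ n) (hp : (p : ℝ) = (1 - ε) / n)
    (hperm : ∀ q, IsPerm n (sched q))
    (hμ : MeasurePreserving (switchStep sched) (μ.prod (arrivalMeasure n p)) μ)
    (htot : Integrable (fun q => (total q : ℝ)) μ) :
    Integrable (fun x => (total (unusedService x.1 (arrivals x.2) (sched x.1)) : ℝ))
        (μ.prod (arrivalMeasure n p)) ∧
      ∫ x, (total (unusedService x.1 (arrivals x.2) (sched x.1)) : ℝ)
        ∂μ.prod (arrivalMeasure n p) = n * ε := by
  have : (n : ℝ) ≠ 0 := Nat.cast_ne_zero.2 (by omega)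
  have hnext : Integrable (fun x => (total (switchStep sched x) : ℝ))
      (μ.prod (arrivalMeasure n p)) := hμ.integrable_comp_of_integrable htot
  have hcur := htot.comp_fst (arrivalMeasure n p)
  have harr : Integrable (fun x => (total (arrivals x.2) + -n : ℝ))
      (μ.prod (arrivalMeasure n p)) :=
    Integrable.comp_snd (f := fun ω => (total (arrivals ω) + -n : ℝ)) .of_finite μ
  have hbalance (x) : (total (unusedService x.1 (arrivals x.2) (sched x.1)) : ℝ) =
      total (switchStep sched x) - (total x.1 + (total (arrivals x.2) + -n)) := by
    rw [total_unusedService (hperm _), switchStep]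
    ring
  refine ⟨(hnext.sub (hcur.add harr)).congr (.of_forall fun x => (hbalance x).symm), ?_⟩
  calc _ = ∫ x, ((total (switchStep sched x) : ℝ) - (total x.1 + (total (arrivals x.2) + -n)))
        ∂μ.prod (arrivalMeasure n p) := integral_congr_ae (.of_forall hbalance)
    _ = ∫ q, (total q : ℝ) ∂μ - (∫ q, (total q : ℝ) ∂μ + (n ^ 2 * p + -n)) := by
      rw [integral_sub hnext, integral_add hcur harr,
        integral_comp_of_measurePreserving hμ (f := fun q => (total q : ℝ)) .of_discrete,
        integral_fun_fst (f := fun q => (total q : ℝ)),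
        integral_fun_snd (f := fun ω => (total (arrivals ω) + -n : ℝ)),
        integral_total_arrivals_add]
      · simp
      · exact hcur.add harr
    _ = n * ε := by rw [hp]; field_simp; ring

theorem integrable_and_integral_infDist_cube_add_unusedService_le (hn : 1 ≤ n)
    (hp : (p : ℝ) = (1 - ε) / n) (hε : 0 ≤ ε) (hε' : ε ≤ 1 / (2 * n)) (hmw : IsMaxWeight n sched)
    (hμ : MeasurePreserving (switchStep sched) (μ.prod (arrivalMeasure n p)) μ)
    (htot : Integrable (fun q => (total q : ℝ)) μ) {a b : ℝ} (ha : 0 ≤ a) :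
    Integrable (fun x => a * infDist (queueVec (switchStep sched x)) (additiveCone (Fin n)) ^ 3 +
        b * total (unusedService x.1 (arrivals x.2) (sched x.1))) (μ.prod (arrivalMeasure n p)) ∧
      ∫ x, (a * infDist (queueVec (switchStep sched x)) (additiveCone (Fin n)) ^ 3 +
        b * total (unusedService x.1 (arrivals x.2) (sched x.1))) ∂μ.prod (arrivalMeasure n p) ≤
        a * (7200 * n ^ 6) + b * (n * ε) := by
  obtain ⟨hX, hXle⟩ := integral_infDist_additiveCone_cube_le hn hp hε hε' hmw hμ
  obtain ⟨hU, hUeq⟩ :=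
    integrable_and_integral_total_unusedService hn hp (fun q => (hmw q).1) hμ htot
  have hXnext : Integrable (fun x =>
      infDist (queueVec (switchStep sched x)) (additiveCone (Fin n)) ^ 3)
    (μ.prod (arrivalMeasure n p)) := hμ.integrable_comp_of_integrable hX
  refine ⟨(hXnext.const_mul a).add (hU.const_mul b), ?_⟩
  rw [integral_add (hXnext.const_mul a) (hU.const_mul b), integral_const_mul, integral_const_mul,
    hUeq, integral_comp_of_measurePreserving hμ
    (f := fun q => infDist (queueVec q) (additiveCone (Fin n)) ^ 3) .of_discrete]
  gcongr

theorem abs_integral_total_sub_le (hn : 1 ≤ n) (hp : (p : ℝ) = (1 - ε) / n)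
    (hε : 0 ≤ ε) (hε' : ε ≤ 1 / (2 * n)) (hmw : IsMaxWeight n sched)
    (hμ : MeasurePreserving (switchStep sched) (μ.prod (arrivalMeasure n p)) μ)
    (hcube : Integrable (fun q => ‖queueVec q‖ ^ 3) μ) {m : ℝ} (hm : 0 < m) :
    |2 * (ε / n) * ∫ q, (total q : ℝ) ∂μ - (ε ^ 2 + (2 * n - 1) * (p * (1 - p)))| ≤
      2 / m ^ 2 * (7200 * n ^ 6) + (2 * m + 1) * (n * ε) := by
  have htot := integrable_total hcube
  obtain ⟨hR, hRle⟩ := integrable_and_integral_infDist_cube_add_unusedService_le hn hp hε hε' hmw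
    hμ htot (a := 2 / m ^ 2) (b := 2 * m + 1) (by positivity)
  have hdrift := abs_integral_le_of_drift hμ
    (f := fun q => ‖(additiveMatrices (Fin n)).starProjection (queueVec q)‖ ^ 2)
    (g := fun q => 2 * (ε / n) * total q - (ε ^ 2 + (2 * n - 1) * (p * (1 - p))))
    (h := fun x => ‖(additiveMatrices (Fin n)).starProjection
      (queueVec x.1 + (queueVec (arrivals x.2) - queueVec (sched x.1)))‖ ^ 2)
    (integrable_norm_starProjection_queueVec_sq hcube) hR .of_discrete
    (fun x => abs_norm_starProjection_nextQ_sq_sub_le (hmw x.1).1 x.1 (arrivals x.2) hm)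
    fun q => (integral_norm_starProjection_arrivals_sq hn hp (hmw q).1 q).trans (by ring)
  rw [integral_sub (htot.const_mul _) (integrable_const _), integral_const_mul, integral_const,
    probReal_univ, one_smul] at hdrift
  exact hdrift.trans hRle

end Stationary

/-! ### The total queue length -/

theorem abs_noise_trace_sub_one_le {n : ℕ} {ε p : ℝ} (hn : 1 ≤ n) (hε : 0 ≤ ε)
    (hε' : ε ≤ 1 / (2 * n)) (hp : p = (1 - ε) / n) :
    |(ε ^ 2 + (2 * n - 1) * (p * (1 - p))) / 2 - 1| ≤ 5 / (2 * (n : ℝ)) := by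
  have hn1 : (1 : ℝ) ≤ n := Nat.one_le_cast.2 hn
  set t : ℝ := 1 / n with ht
  have ht0 : 0 < t := by positivity
  have ht1 : t ≤ 1 := (div_le_one (by positivity)).2 hn1
  have hεt : ε ≤ t / 2 := hε'.trans_eq (by rw [ht]; field_simp)
  have hexpand : (ε ^ 2 + (2 * n - 1) * (p * (1 - p))) / 2 =
      ε ^ 2 / 2 + (1 - t / 2) * ((1 - ε) * (1 - (1 - ε) * t)) := by
    rw [hp, ht]; field_simp
  have hx0 : 0 ≤ (1 - ε) * t := mul_nonneg (by linarith) ht0.le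
  have hx1 : (1 - ε) * t ≤ t := mul_le_of_le_one_left ht0.le (by linarith)
  have hlow : (1 - ε - t) ≤ (1 - ε) * (1 - (1 - ε) * t) := by nlinarith
  have hupp : (1 - ε) * (1 - (1 - ε) * t) ≤ 1 :=
    mul_le_one₀ (by linarith) (by linarith) (by linarith)
  rw [hexpand, show 5 / (2 * (n : ℝ)) = 5 / 2 * t by rw [ht]; field_simp, abs_le]
  constructor <;> nlinarith

section FixedSize

variable {n : ℕ} {p : unitInterval} {sched : (Fin n → Fin n → ℕ) → Fin n → Fin n → ℕ} {ε : ℝ}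

theorem abs_mul_integral_total_sub_one_le {μ : Measure (Fin n → Fin n → ℕ)}
    [IsProbabilityMeasure μ] (hn : 1 ≤ n) (hp : (p : ℝ) = (1 - ε) / n)
    (hε : 0 < ε) (hε' : ε ≤ 1 / (2 * n)) (hmw : IsMaxWeight n sched)
    (hμ : MeasurePreserving (switchStep sched) (μ.prod (arrivalMeasure n p)) μ)
    (hcube : Integrable (fun q => ‖queueVec q‖ ^ 3) μ) :
    |ε / n * ∫ q, (total q : ℝ) ∂μ - 1| ≤
      7201 * (n ^ 4 * ε) + √(n ^ 4 * ε) + 5 / (2 * (n : ℝ)) := by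
  have hn1 : (1 : ℝ) ≤ n := Nat.one_le_cast.2 hn
  obtain ⟨r, hr, hrε⟩ : ∃ r, 0 < r ∧ ε = r ^ 2 :=
    ⟨√ε, Real.sqrt_pos.2 hε, (Real.sq_sqrt hε.le).symm⟩
  have hroot : √((n : ℝ) ^ 4 * ε) = n ^ 2 * r := by
    rw [hrε, show (n : ℝ) ^ 4 * r ^ 2 = (n ^ 2 * r) ^ 2 by ring, Real.sqrt_sq (by positivity)]
  have hdrift := abs_integral_total_sub_le hn hp hε.le hε' hmw hμ hcube (m := n / r) (by positivity)
  have herr : 2 / (n / r) ^ 2 * (7200 * n ^ 6) + (2 * (n / r) + 1) * (n * ε) =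
      14400 * (n ^ 4 * ε) + 2 * √(n ^ 4 * ε) + n * ε := by
    rw [hroot, hrε]
    field_simp
    ring
  have hlin : (n : ℝ) * ε ≤ n ^ 4 * ε := by gcongr; exact le_self_pow₀ hn1 (by norm_num)
  have htrace := abs_noise_trace_sub_one_le hn hε.le hε' hp
  rw [herr] at hdrift
  rw [abs_le] at hdrift htrace ⊢
  constructor <;> linarith [show 0 ≤ (n : ℝ) * ε by positivity]

theorem Etot_eq_ofReal_integral_total {pd : (Fin n → Fin n → ℕ) → ℝ≥0∞}
    {μ : Measure (Fin n → Fin n → ℕ)} (hpd : ∀ q, μ {q} = pd q)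
    (htot : Integrable (fun q => (total q : ℝ)) μ) :
    Etot n pd = ENNReal.ofReal (∫ q, (total q : ℝ) ∂μ) := by
  rw [ofReal_integral_eq_lintegral_ofReal htot (.of_forall fun q => Nat.cast_nonneg _),
    lintegral_countable']
  refine tsum_congr fun q => ?_
  rw [ENNReal.ofReal_natCast, hpd, mul_comm]
  simp [total]

theorem IsInvariant.exists_measurePreserving {pd : (Fin n → Fin n → ℕ) → ℝ≥0∞}
    (h : IsInvariant n (kernelMW n (fun _ _ => bern p) sched) pd) :
    ∃ μ : Measure (Fin n → Fin n → ℕ), IsProbabilityMeasure μ ∧ (∀ q, μ {q} = pd q) ∧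
      MeasurePreserving (switchStep sched) (μ.prod (arrivalMeasure n p)) μ := by
  let π : PMF (Fin n → Fin n → ℕ) := ⟨pd, ENNReal.summable.hasSum_iff.2 h.1⟩
  have hπ (q) : π.toMeasure {q} = pd q := π.toMeasure_apply_singleton q .of_discrete
  exact ⟨π.toMeasure, inferInstance, hπ, h.measurePreserving hπ⟩

theorem IsMaxWeight.Etot_ne_top_and_abs_sub_one_le {pd : (Fin n → Fin n → ℕ) → ℝ≥0∞}
    (hmw : IsMaxWeight n sched) (hn : 1 ≤ n) (hε : 0 < ε) (hε' : ε ≤ 1 / (2 * n))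
    (hinv : IsInvariant n (kernelMW n (fun _ _ => bern ((1 - ε) / n)) sched) pd) :
    Etot n pd ≠ ∞ ∧ |ε / n * (Etot n pd).toReal - 1| ≤
      7201 * (n ^ 4 * ε) + √(n ^ 4 * ε) + 5 / (2 * (n : ℝ)) := by
  have hn1 : (1 : ℝ) ≤ n := Nat.one_le_cast.2 hn
  have hε1 : ε ≤ 1 := hε'.trans ((div_le_one (by positivity)).2 (by linarith))
  let p : unitInterval := ⟨(1 - ε) / n, div_nonneg (by linarith) n.cast_nonneg,
    div_le_one_of_le₀ (by linarith) n.cast_nonneg⟩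
  obtain ⟨μ, _, hpd, hμ⟩ := hinv.exists_measurePreserving (p := p)
  have hcube := integrable_norm_queueVec_cube hn rfl hε hε1 hmw hμ
  rw [Etot_eq_ofReal_integral_total hpd (integrable_total hcube),
    ENNReal.toReal_ofReal (integral_nonneg fun q => Nat.cast_nonneg _)]
  exact ⟨ENNReal.ofReal_ne_top, abs_mul_integral_total_sub_one_le hn rfl hε hε' hmw hμ hcube⟩

end FixedSize

theorem tendsto_mul_Etot {ε : ℕ → ℝ} {sched : ∀ n, (Fin n → Fin n → ℕ) → Fin n → Fin n → ℕ}
    {pd : ∀ n, (Fin n → Fin n → ℕ) → ℝ≥0∞} (hε : ∀ n, 1 ≤ n → 0 < ε n)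
    (hε' : ∀ n : ℕ, 1 ≤ n → ε n ≤ 1 / (2 * n))
    (hlim : Tendsto (fun n : ℕ => n ^ 4 * ε n) atTop (𝓝 0))
    (hmw : ∀ n, 1 ≤ n → IsMaxWeight n (sched n))
    (hinv : ∀ n : ℕ, 1 ≤ n →
      IsInvariant n (kernelMW n (fun _ _ => bern ((1 - ε n) / n)) (sched n)) (pd n)) :
    Tendsto (fun n : ℕ => ε n / n * (Etot n (pd n)).toReal) atTop (𝓝 1) := by
  have hinv_n : Tendsto (fun n : ℕ => 5 / (2 * (n : ℝ))) atTop (𝓝 0) :=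
    tendsto_const_nhds.div_atTop
      (tendsto_natCast_atTop_atTop.const_mul_atTop (by norm_num))
  have hbound : Tendsto (fun n : ℕ => 7201 * (n ^ 4 * ε n) + √(n ^ 4 * ε n) + 5 / (2 * (n : ℝ)))
      atTop (𝓝 0) := by
    simpa using ((hlim.const_mul 7201).add hlim.sqrt).add hinv_n
  refine tendsto_iff_norm_sub_tendsto_zero.2 (squeeze_zero' (.of_forall fun n => norm_nonneg _)
    ?_ hbound)
  filter_upwards [eventually_ge_atTop 1] with n hn
  exact ((hmw n hn).Etot_ne_top_and_abs_sub_one_le hn (hε n hn) (hε' n hn) (hinv n hn)).2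

section Scaling

variable {α : Type*} {l : Filter α} {E L γ : α → ℝ} {c C : ℝ}

theorem tendsto_sub_div_div_of_tendsto (hL : ∀ᶠ n in l, 0 < L n) (hc : 0 < c)
    (hγ : ∀ᶠ n in l, c ≤ γ n) (h : Tendsto (fun n => γ n / L n * E n) l (𝓝 1)) :
    Tendsto (fun n => (E n - L n / γ n) / L n) l (𝓝 0) := by
  have hbdd : ∀ᶠ n in l, |(γ n)⁻¹| ≤ c⁻¹ := hγ.mono fun n hn => by
    rw [abs_of_pos (inv_pos.2 (hc.trans_le hn))]
    exact inv_anti₀ hc hn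
  have hzero : Tendsto (fun n => γ n / L n * E n - 1) l (𝓝 0) := by
    simpa using h.sub_const 1
  refine (bdd_le_mul_tendsto_zero' c⁻¹ hbdd hzero).congr' ?_
  filter_upwards [hL, hγ] with n hLn hγn
  have : 0 < γ n := hc.trans_le hγn
  field_simp

theorem eventually_le_and_le_of_tendsto (hL : ∀ᶠ n in l, 0 < L n) (hc : 0 < c)
    (hγ : ∀ᶠ n in l, c ≤ γ n ∧ γ n ≤ C) (h : Tendsto (fun n => γ n / L n * E n) l (𝓝 1)) :
    ∀ᶠ n in l, 1 / (2 * C) * L n ≤ E n ∧ E n ≤ 2 / c * L n := by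
  filter_upwards [hL, hγ, h.eventually_const_le (show (1 / 2 : ℝ) < 1 by norm_num),
    h.eventually_le_const (show (1 : ℝ) < 2 by norm_num)] with n hLn ⟨hcγ, hγC⟩ hlow hupp
  have hγ0 : 0 < γ n := hc.trans_le hcγ
  have hEeq : E n = γ n / L n * E n / γ n * L n := by field_simp
  rw [hEeq]
  constructor
  · rw [← div_div]; gcongr
  · gcongr

end Scaling

theorem tendsto_pow_four_mul_rpow_neg {β C : ℝ} (hβ : 4 < β) {γ : ℕ → ℝ}
    (hγ : ∀ n : ℕ, 1 ≤ n → 0 ≤ γ n ∧ γ n ≤ C) :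
    Tendsto (fun n : ℕ => (n : ℝ) ^ 4 * (γ n * (n : ℝ) ^ (-β))) atTop (𝓝 0) := by
  have hpow : Tendsto (fun n : ℕ => C * (n : ℝ) ^ (-(β - 4))) atTop (𝓝 0) := by
    simpa using
      ((tendsto_rpow_neg_atTop (sub_pos.2 hβ)).comp tendsto_natCast_atTop_atTop).const_mul C
  have hexp {n : ℕ} (hn : 1 ≤ n) : (n : ℝ) ^ 4 * (n : ℝ) ^ (-β) = (n : ℝ) ^ (-(β - 4)) := by
    rw [← Real.rpow_natCast, ← Real.rpow_add (Nat.cast_pos.2 hn)]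
    congr 1
    push_cast
    ring
  refine squeeze_zero' ?_ ?_ hpow <;> filter_upwards [eventually_ge_atTop 1] with n hn
  · have := (hγ n hn).1
    positivity
  · rw [mul_left_comm, hexp hn]
    gcongr
    exact (hγ n hn).2

theorem mul_rpow_neg_div_natCast {n : ℕ} (hn : 1 ≤ n) (x β : ℝ) :
    x * (n : ℝ) ^ (-β) / n = x / (n : ℝ) ^ (1 + β) := by
  have hn0 : (0 : ℝ) < n := Nat.cast_pos.2 hn
  rw [Real.rpow_neg hn0.le, Real.rpow_add hn0, Real.rpow_one]
  field_simp

theorem mul_rpow_neg_le_one_div {n : ℕ} (hn : 1 ≤ n) {x β : ℝ} (h : 2 * x ≤ (n : ℝ) ^ (β - 1)) :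
    x * (n : ℝ) ^ (-β) ≤ 1 / (2 * n) := by
  have hn0 : (0 : ℝ) < n := Nat.cast_pos.2 hn
  rw [Real.rpow_sub_one hn0.ne', le_div_iff₀ hn0] at h
  rw [Real.rpow_neg hn0.le, ← div_eq_mul_inv, div_le_div_iff₀ (by positivity) (by positivity)]
  linarith

end SwitchModel

/-- Corollary 6.2, MaxWeight part: optimal scaling of MaxWeight in the
simultaneous heavy-traffic / large-switch regime `ε_n = γ_n n^{−β}`, `β > 4`. -/
theorem maxweight_scaling_regime
    (β : ℝ) (hβ : 4 < β)
    (γ : ℕ → ℝ) (c C : ℝ) (hc : 0 < c)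
    (hγ : ∀ n : ℕ, 1 ≤ n → c ≤ γ n ∧ γ n ≤ C)
    (hγ2 : ∀ n : ℕ, 1 ≤ n → 2 * γ n ≤ (n : ℝ) ^ (β - 1))
    (sched : ∀ n : ℕ, (Fin n → Fin n → ℕ) → (Fin n → Fin n → ℕ))
    (pd : ∀ n : ℕ, (Fin n → Fin n → ℕ) → ℝ≥0∞)
    (hmw : ∀ n : ℕ, 1 ≤ n → IsMaxWeight n (sched n))
    (hinv : ∀ n : ℕ, 1 ≤ n →
      IsInvariant n
        (kernelMW n (fun _ _ => bern ((1 - γ n * (n : ℝ) ^ (-β)) / n)) (sched n)) (pd n)) :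
    Tendsto (fun n : ℕ =>
        ((Etot n (pd n)).toReal - (n : ℝ) ^ (1 + β) / γ n) / (n : ℝ) ^ (1 + β))
      atTop (nhds 0) ∧
    ∃ c' C' : ℝ, 0 < c' ∧ ∀ᶠ n : ℕ in atTop,
      ENNReal.ofReal (c' * (n : ℝ) ^ (1 + β)) ≤ Etot n (pd n) ∧
      Etot n (pd n) ≤ ENNReal.ofReal (C' * (n : ℝ) ^ (1 + β)) := by
  have hγ0 (n : ℕ) (hn : 1 ≤ n) : 0 < γ n := hc.trans_le (hγ n hn).1
  have hε (n : ℕ) (hn : 1 ≤ n) : 0 < γ n * (n : ℝ) ^ (-β) :=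
    mul_pos (hγ0 n hn) (Real.rpow_pos_of_pos (Nat.cast_pos.2 hn) _)
  have hε' (n : ℕ) (hn : 1 ≤ n) := mul_rpow_neg_le_one_div hn (hγ2 n hn)
  have hone := eventually_ge_atTop (α := ℕ) 1
  have hL : ∀ᶠ n : ℕ in atTop, 0 < (n : ℝ) ^ (1 + β) :=
    hone.mono fun n hn => Real.rpow_pos_of_pos (Nat.cast_pos.2 hn) _
  have hlim := tendsto_mul_Etot hε hε'
    (tendsto_pow_four_mul_rpow_neg hβ fun n hn => ⟨(hγ0 n hn).le, (hγ n hn).2⟩) hmw hinv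
  replace hlim := hlim.congr' (hone.mono fun n hn => by rw [mul_rpow_neg_div_natCast hn])
  refine ⟨tendsto_sub_div_div_of_tendsto hL hc (hone.mono fun n hn => (hγ n hn).1) hlim,
    1 / (2 * C), 2 / c, one_div_pos.2 (mul_pos two_pos ((hγ0 1 le_rfl).trans_le (hγ 1 le_rfl).2)),
    ?_⟩
  filter_upwards [hone, eventually_le_and_le_of_tendsto hL hc (hone.mono hγ) hlim]
    with n hn ⟨hlow, hupp⟩
  have htop := ((hmw n hn).Etot_ne_top_and_abs_sub_one_le hn (hε n hn) (hε' n hn) (hinv n hn)).1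
  exact ⟨ENNReal.ofReal_le_of_le_toReal hlow, (ENNReal.le_ofReal_iff_toReal_le htop
    (ENNReal.toReal_nonneg.trans hupp)).2 hupp⟩
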